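/- arXiv:0809.2194 — 5 statements merged into one kernel-verified Lean document; each statement's English description precedes it below -/
import Mathlib

section
/- Let I be an ideal of the polynomial ring R = K[x_1,...,x_n] generated by squarefree monomials, and let φ: R → R be the K-algebra homomorphism sending f(x_1,...,x_n) to f(x_1^2,...,x_n^2). If q_1,...,q_h ∈ R satisfy √(q_1,...,q_h) = I, then φ(q_1),...,φ(q_h) ∈ I and √(φ(q_1),...,φ(q_h)) = I. -/
open MvPolynomial

section Core

variable {V : Type*} [DecidableEq V]

/-- `Δ` is a simplicial complex on the vertex set `V`: every singleton is a face
and faces are closed under taking subsets. -/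
def IsSimplicialComplex (Δ : Set (Finset V)) : Prop :=
  (∀ v : V, ({v} : Finset V) ∈ Δ) ∧ ∀ F ∈ Δ, ∀ G ⊆ F, G ∈ Δ

/-- The Stanley-Reisner ideal of `Δ` over `K`: generated by the squarefree monomials
whose support is not a face of `Δ`. -/
noncomputable def srIdeal (K : Type*) [Field K] (Δ : Set (Finset V)) :
    Ideal (MvPolynomial V K) :=
  Ideal.span ((fun S : Finset V => ∏ v ∈ S, (X v : MvPolynomial V K)) '' {S | S ∉ Δ})

/-- The simplicial complex `Δ ∪ co_{x₀} F` on the vertex set `V ∪ {x₀}`,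
realized as `Option V` with `none` playing the role of the new vertex `x₀`. -/
def coneUnion (Δ : Set (Finset V)) (F : Finset V) : Set (Finset (Option V)) :=
  ((fun G : Finset V => G.map Function.Embedding.some) '' Δ) ∪
    {G : Finset (Option V) | G ⊆ insert none (F.map Function.Embedding.some)}

/-- A facet is a maximal face. -/
def IsFacet (Δ : Set (Finset V)) (F : Finset V) : Prop :=
  F ∈ Δ ∧ ∀ G ∈ Δ, F ⊆ G → F = G

/-- The prime ideal `P_F` generated by the variables not in `F`. -/
noncomputable def facePrime (K : Type*) [Field K] (F : Finset V) :
    Ideal (MvPolynomial V K) :=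
  Ideal.span ((fun v : V => (X v : MvPolynomial V K)) '' {v : V | v ∉ F})

/-- The dimension of a simplicial complex. -/
noncomputable def scDim (Δ : Set (Finset V)) : ℕ := sSup (Finset.card '' Δ) - 1

/-- A subfacet of a (pure) complex: a face whose cardinality equals the dimension. -/
noncomputable def IsSubfacet (Δ : Set (Finset V)) (F : Finset V) : Prop :=
  F ∈ Δ ∧ F.card = scDim Δ

end Core

/-- The arithmetical rank of an ideal: the least number of elements generating it
up to radical. -/
noncomputable def ara {R : Type*} [CommRing R] (I : Ideal R) : ℕ :=
  sInf {s : ℕ | ∃ a : Fin s → R, (Ideal.span (Set.range a)).radical = I.radical}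

/-- The height of an ideal: the infimum of the heights of the primes containing it. -/
noncomputable def idealHeight {R : Type*} [CommRing R] (I : Ideal R) : ℕ∞ :=
  ⨅ p : {p : PrimeSpectrum R // I ≤ p.asIdeal}, Order.height p.1

/-- if `I` is generated by squarefree monomials and `q₁,…,q_h` generate `I`
up to radical, then the images `φ(qᵢ)` under the substitution `xⱼ ↦ xⱼ²` lie in `I` and
still generate `I` up to radical. -/
theorem radical_span_squares {V : Type*} [DecidableEq V] {K : Type*} [Field K]
    (I : Ideal (MvPolynomial V K))
    (hI : ∃ S : Set (Finset V),
      I = Ideal.span ((fun s : Finset V => ∏ v ∈ s, (X v : MvPolynomial V K)) '' S))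
    {h : ℕ} (q : Fin h → MvPolynomial V K)
    (hq : (Ideal.span (Set.range q)).radical = I) :
    (∀ i, aeval (fun v : V => (X v : MvPolynomial V K) ^ 2) (q i) ∈ I) ∧
      (Ideal.span (Set.range fun i =>
        aeval (fun v : V => (X v : MvPolynomial V K) ^ 2) (q i))).radical = I := by
  obtain ⟨S, hS⟩ := hI
  have hrad : I.IsRadical := hq ▸ Ideal.radical_isRadical _
  set φ : MvPolynomial V K →ₐ[K] MvPolynomial V K := (aeval (fun v : V => (X v : MvPolynomial V K) ^ 2)) with hφ
  have hm : ∀ s : Finset V, φ (∏ v ∈ s, (X v : MvPolynomial V K))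
      = (∏ v ∈ s, (X v : MvPolynomial V K)) ^ 2 := by
    intro s
    simp [hφ, map_prod, Finset.prod_pow]
  have hle : I ≤ I.comap φ := by
    conv_lhs => rw [hS]
    rw [Ideal.span_le]
    rintro _ ⟨s, hs, rfl⟩
    change φ (∏ v ∈ s, (X v : MvPolynomial V K)) ∈ I
    rw [hm]
    refine Ideal.pow_mem_of_mem _ ?_ 2 (by norm_num)
    rw [hS]
    exact Ideal.subset_span ⟨s, hs, rfl⟩
  have hmem : ∀ i, φ (q i) ∈ I := fun i => by
    refine hle (?_ : q i ∈ I)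
    rw [← hq]
    exact Ideal.le_radical (Ideal.subset_span ⟨i, rfl⟩)
  refine ⟨hmem, le_antisymm ?_ ?_⟩
  · rw [hrad.radical_le_iff, Ideal.span_le]
    rintro _ ⟨i, rfl⟩
    exact hmem i
  · have hspan : Ideal.span (Set.range q) ≤
        (Ideal.span (Set.range fun i => φ (q i))).comap φ := by
      rw [Ideal.span_le]
      rintro _ ⟨i, rfl⟩
      exact Ideal.subset_span ⟨i, rfl⟩
    conv_lhs => rw [hS]
    rw [Ideal.span_le]
    rintro _ ⟨s, hs, rfl⟩
    have h1 : (∏ v ∈ s, (X v : MvPolynomial V K)) ∈ I := by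
      rw [hS]
      exact Ideal.subset_span ⟨s, hs, rfl⟩
    rw [← hq] at h1
    obtain ⟨k, hk⟩ := h1
    have h2 := hspan hk
    rw [Ideal.mem_comap, map_pow, hm, ← pow_mul] at h2
    exact ⟨_, h2⟩
end

section
/- Let K be an algebraically closed field, Δ a simplicial complex on the vertex set X = {x_1,...,x_n}, F a face of Δ, and Δ' = Δ ∪ co_{x_0}F. Then ara I_{Δ'} ≤ max(ara I_Δ + 1, n − |F|). -/
open MvPolynomial

/-! ### Linear algebra lemma -/

lemma aux_det {S : Type*} [CommRing S] {N : ℕ} (x0 : S) (a y : Fin N → S)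
    (ha : ∀ i, a i ∈ Ideal.span (Set.range y)) :
    ∃ c ∈ Ideal.span (Set.range y), ∀ p : Ideal S, (∀ i, a i ^ 2 + x0 * y i ∈ p) →
      ∀ i, (x0 ^ N + c) * y i ∈ p := by
  have h1 : ∀ i, ∃ f : Fin N → S, ∑ j, f j * y j = a i := by
    intro i
    obtain ⟨f, hf⟩ := (Submodule.mem_span_range_iff_exists_fun S).1 (ha i)
    exact ⟨f, by simpa using hf⟩
  choose f hf using h1
  let A : Matrix (Fin N) (Fin N) S := fun i j => a i * f i j
  let M : Matrix (Fin N) (Fin N) S := Matrix.scalar (Fin N) x0 + A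
  have hMy : ∀ i, (M.mulVec y) i = a i ^ 2 + x0 * y i := by
    intro i
    have : (A.mulVec y) i = a i ^ 2 := by
      simp only [Matrix.mulVec, dotProduct, A, mul_assoc]
      rw [← Finset.mul_sum, hf, sq]
    simp only [M, Matrix.add_mulVec, Pi.add_apply, this]
    rw [Matrix.scalar_apply, Matrix.mulVec_diagonal]
    ring
  refine ⟨M.det - x0 ^ N, ?_, ?_⟩
  · rw [← Ideal.Quotient.eq_zero_iff_mem, map_sub, RingHom.map_det]
    have : (Ideal.Quotient.mk (Ideal.span (Set.range y))).mapMatrix M =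
        Matrix.scalar (Fin N) (Ideal.Quotient.mk (Ideal.span (Set.range y)) x0) := by
      ext i j
      have hA : Ideal.Quotient.mk (Ideal.span (Set.range y)) (A i j) = 0 :=
        Ideal.Quotient.eq_zero_iff_mem.2 (Ideal.mul_mem_right _ _ (ha i))
      simp only [RingHom.mapMatrix_apply, Matrix.map_apply, M, Matrix.add_apply, map_add, hA,
        Matrix.scalar_apply, Matrix.diagonal_apply]
      split_ifs <;> simp
    rw [this]
    simp
  · intro p hp i
    have h2 : (M.adjugate.mulVec (M.mulVec y)) i = M.det * y i := by
      rw [Matrix.mulVec_mulVec, Matrix.adjugate_mul]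
      simp [Matrix.smul_mulVec]
    have : x0 ^ N + (M.det - x0 ^ N) = M.det := by ring
    rw [this, ← h2]
    simp only [Matrix.mulVec, dotProduct]
    refine Ideal.sum_mem _ fun j _ => Ideal.mul_mem_left _ _ ?_
    have := hMy j
    simp only [Matrix.mulVec, dotProduct] at this
    rw [this]
    exact hp j

lemma aux_elements {S : Type*} [CommRing S] {N : ℕ} (x0 z : S) (a y : Fin N → S)
    (ha : ∀ i, a i ∈ Ideal.span (Set.range y)) :
    ∃ b : Fin (N + 1) → S,
      (∀ Q : Ideal S, (∀ i, a i ∈ Q) → (∀ i, x0 * y i ∈ Q) → x0 * z ∈ Q → ∀ i, b i ∈ Q) ∧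
      ∀ p : Ideal S, p.IsPrime → (∀ i, b i ∈ p) →
        (∀ i, a i ∈ p) ∧ (x0 ∈ p ∨ (z ∈ p ∧ ∀ i, y i ∈ p)) := by
  obtain ⟨c, hc, hcp⟩ := aux_det x0 a y ha
  refine ⟨Fin.snoc (fun i => a i ^ 2 + x0 * y i) (x0 * (z * (x0 ^ N + c) + c)), ?_, ?_⟩
  · intro Q h1 h2 h3 i
    have hxc : x0 * c ∈ Q := by
      have : Ideal.span (Set.range y) ≤ Submodule.comap (LinearMap.mulLeft S x0) Q := by
        rw [Ideal.span_le]
        rintro _ ⟨i, rfl⟩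
        exact h2 i
      exact this hc
    refine Fin.lastCases ?_ (fun j => ?_) i
    · rw [Fin.snoc_last]
      have : x0 * (z * (x0 ^ N + c) + c) = (x0 ^ N + c) * (x0 * z) + x0 * c := by ring
      rw [this]
      exact Q.add_mem (Q.mul_mem_left _ h3) hxc
    · rw [Fin.snoc_castSucc]
      exact Q.add_mem (Ideal.pow_mem_of_mem _ (h1 j) 2 (by norm_num)) (h2 j)
  · intro p hp hb
    have hb1 : ∀ i, a i ^ 2 + x0 * y i ∈ p := fun i => by
      simpa only [Fin.snoc_castSucc] using hb i.castSucc
    have hb2 : x0 * (z * (x0 ^ N + c) + c) ∈ p := by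
      simpa only [Fin.snoc_last] using hb (Fin.last N)
    by_cases hx : x0 ∈ p
    · refine ⟨fun i => ?_, Or.inl hx⟩
      exact hp.mem_of_pow_mem 2
        ((Ideal.add_mem_iff_left p (Ideal.mul_mem_right _ _ hx)).1 (hb1 i))
    · have hb3 := (hp.mem_or_mem hb2).resolve_left hx
      have hxN : x0 ^ N ∉ p := fun h => hx (hp.mem_of_pow_mem N h)
      have hD : x0 ^ N + c ∉ p := by
        intro h
        have : c ∈ p := (Ideal.add_mem_iff_right p (Ideal.mul_mem_left _ _ h)).1 hb3
        exact hxN ((Ideal.add_mem_iff_left p this).1 h)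
      have hy : ∀ i, y i ∈ p := fun i => (hp.mem_or_mem (hcp p hb1 i)).resolve_left hD
      have hsp : Ideal.span (Set.range y) ≤ p := by
        rw [Ideal.span_le]
        rintro _ ⟨i, rfl⟩
        exact hy i
      refine ⟨fun i => hsp (ha i), Or.inr ⟨?_, hy⟩⟩
      exact (hp.mem_or_mem ((Ideal.add_mem_iff_left p (hsp hc)).1 hb3)).resolve_right hD

/-! ### Padding -/

lemma aux_pad {R : Type*} [Zero R] (T : Finset R) (N : ℕ) (h : T.card ≤ N) :
    ∃ y : Fin N → R, (∀ t ∈ T, ∃ i, y i = t) ∧ ∀ i, y i = 0 ∨ y i ∈ T := by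
  refine ⟨fun i => if h : (i : ℕ) < T.card then (T.equivFin.symm ⟨i, h⟩ : R) else 0, ?_, ?_⟩
  · intro t ht
    refine ⟨Fin.castLE h (T.equivFin ⟨t, ht⟩), ?_⟩
    simp
  · intro i
    by_cases hi : (i : ℕ) < T.card
    · right
      simp only [hi, dif_pos]
      exact Subtype.coe_prop _
    · left
      simp [hi]

/-! ### Face primes -/

lemma facePrime_sub_mem {V : Type*} [DecidableEq V] (K : Type*) [Field K] (F : Finset V)
    (f : MvPolynomial V K) :
    f - aeval (fun v => if v ∈ F then (X v : MvPolynomial V K) else 0) f ∈ facePrime K F := by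
  induction f using MvPolynomial.induction_on with
  | C a => simp [MvPolynomial.algebraMap_eq]
  | add p q hp hq =>
    rw [map_add, add_sub_add_comm]
    exact Ideal.add_mem _ hp hq
  | mul_X p v hp =>
    rw [map_mul, aeval_X]
    by_cases hv : v ∈ F
    · rw [if_pos hv, ← sub_mul]
      exact Ideal.mul_mem_right _ _ hp
    · rw [if_neg hv, mul_zero, sub_zero]
      exact Ideal.mul_mem_left _ _ (Ideal.subset_span ⟨v, hv, rfl⟩)

lemma facePrime_eq_ker {V : Type*} [DecidableEq V] (K : Type*) [Field K] (F : Finset V) :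
    facePrime K F = RingHom.ker
      (aeval (R := K) (fun v => if v ∈ F then (X v : MvPolynomial V K) else 0)) := by
  apply le_antisymm
  · rw [facePrime, Ideal.span_le]
    rintro _ ⟨v, hv, rfl⟩
    have hv' : v ∉ F := hv
    simp [hv']
  · intro f hf
    have := facePrime_sub_mem K F f
    rwa [(RingHom.mem_ker).1 hf, sub_zero] at this

lemma facePrime_isPrime {V : Type*} [DecidableEq V] (K : Type*) [Field K] (F : Finset V) :
    (facePrime K F).IsPrime := by
  rw [facePrime_eq_ker]
  exact RingHom.ker_isPrime _

lemma X_mem_facePrime {V : Type*} [DecidableEq V] (K : Type*) [Field K] (F : Finset V) (v : V) :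
    (X v : MvPolynomial V K) ∈ facePrime K F ↔ v ∉ F := by
  rw [facePrime_eq_ker, RingHom.mem_ker]
  by_cases hv : v ∈ F <;> simp [hv]

lemma card_le_height {V : Type*} [Fintype V] [DecidableEq V] (K : Type*) [Field K]
    (T : Finset V) : (T.card : ℕ∞) ≤ (facePrime K Tᶜ).height := by
  induction T using Finset.induction_on with
  | empty => simp
  | insert v T hv ih =>
    have := facePrime_isPrime K Tᶜ
    have := facePrime_isPrime K (insert v T)ᶜ
    have hlt : facePrime K Tᶜ < facePrime K (insert v T)ᶜ := by
      refine lt_of_le_of_ne ?_ ?_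
      · rw [facePrime, Ideal.span_le]
        rintro _ ⟨w, hw, rfl⟩
        have hw' : w ∉ Tᶜ := hw
        refine (X_mem_facePrime K _ w).2 ?_
        simp at hw' ⊢
        exact fun _ => hw'
      · intro h
        have h1 : (X v : MvPolynomial V K) ∈ facePrime K (insert v T)ᶜ :=
          (X_mem_facePrime K _ v).2 (by simp)
        rw [← h, X_mem_facePrime] at h1
        simp [hv] at h1
    rw [Finset.card_insert_of_notMem hv]
    push_cast
    exact (add_le_add_left ih 1).trans (Ideal.height_add_one_le_of_lt_of_isPrime hlt)

lemma srIdeal_le_facePrime {V : Type*} [DecidableEq V] (K : Type*) [Field K]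
    (Δ : Set (Finset V)) (hΔ : IsSimplicialComplex Δ) (G : Finset V) (hG : G ∈ Δ) :
    srIdeal K Δ ≤ facePrime K G := by
  rw [srIdeal, Ideal.span_le]
  rintro _ ⟨S, hS, rfl⟩
  have : ¬ S ⊆ G := fun h => hS (hΔ.2 G hG S h)
  obtain ⟨v, hvS, hvG⟩ := Finset.not_subset.1 this
  exact Ideal.mem_of_dvd _ (Finset.dvd_prod_of_mem _ hvS) ((X_mem_facePrime K G v).2 hvG)

lemma facet_card_le {V : Type*} [Fintype V] [DecidableEq V] (K : Type*) [Field K]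
    (Δ : Set (Finset V)) (hΔ : IsSimplicialComplex Δ) (F : Finset V) (hF : IsFacet Δ F)
    {r : ℕ} (a : Fin r → MvPolynomial V K)
    (ha : (Ideal.span (Set.range a)).radical = (srIdeal K Δ).radical) :
    Fintype.card V - F.card ≤ r := by
  classical
  have hprime := facePrime_isPrime K F
  have hle := srIdeal_le_facePrime K Δ hΔ F hF.1
  have hmin : facePrime K F ∈ (Ideal.span (Set.range a)).minimalPrimes := by
    rw [← Ideal.radical_minimalPrimes, ha, Ideal.radical_minimalPrimes]
    refine ⟨⟨hprime, hle⟩, ?_⟩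
    rintro p ⟨hp, hpI⟩ hpF
    rw [facePrime, Ideal.span_le]
    rintro _ ⟨v, hv, rfl⟩
    by_contra hvp
    let G : Finset V := Finset.univ.filter fun v => (X v : MvPolynomial V K) ∉ p
    have hG : G ∈ Δ := by
      by_contra hG
      have h1 : ∏ v ∈ G, (X v : MvPolynomial V K) ∈ p := hpI (Ideal.subset_span ⟨G, hG, rfl⟩)
      obtain ⟨w, hw, hwp⟩ := (hp.prod_mem_iff).1 h1
      exact (Finset.mem_filter.1 hw).2 hwp
    have hFG : F ⊆ G := by
      intro w hw
      refine Finset.mem_filter.2 ⟨Finset.mem_univ _, fun h => ?_⟩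
      exact (X_mem_facePrime K F w).1 (hpF h) hw
    have := hF.2 G hG hFG
    apply hv
    rw [this]
    exact Finset.mem_filter.2 ⟨Finset.mem_univ _, hvp⟩
  have h1 := Ideal.height_le_card_of_mem_minimalPrimes_span (Set.finite_range a) hmin
  have h2 := card_le_height K Fᶜ
  rw [compl_compl] at h2
  have h3 : ((Fᶜ.card : ℕ) : ℕ∞) ≤ ((Set.range a).ncard : ℕ) := h2.trans h1
  have h4 : Fᶜ.card ≤ (Set.range a).ncard := by exact_mod_cast h3
  rw [Finset.card_compl] at h4
  refine h4.trans ?_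
  rw [← Set.image_univ]
  refine (Set.ncard_image_le Set.finite_univ).trans ?_
  simp [Set.ncard_univ]

lemma ara_spec {V : Type*} [Fintype V] [DecidableEq V] (K : Type*) [Field K]
    (Δ : Set (Finset V)) : ∃ a : Fin (ara (srIdeal K Δ)) → MvPolynomial V K,
      (Ideal.span (Set.range a)).radical = (srIdeal K Δ).radical := by
  have hne : {s : ℕ | ∃ a : Fin s → MvPolynomial V K,
      (Ideal.span (Set.range a)).radical = (srIdeal K Δ).radical}.Nonempty := by
    obtain ⟨s, a, h⟩ := Submodule.fg_iff_exists_fin_generating_family.1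
      (IsNoetherian.noetherian (srIdeal K Δ))
    refine ⟨s, a, ?_⟩
    have h' : Ideal.span (Set.range a) = srIdeal K Δ := h
    rw [h']
  exact Nat.sInf_mem hne

/-! ### The cone -/

lemma map_mem_cone {V : Type*} [DecidableEq V] (K : Type*) [Field K]
    (Δ : Set (Finset V)) (hΔ : IsSimplicialComplex Δ) (F : Finset V) (hF : F ∈ Δ) :
    srIdeal K Δ ≤ (srIdeal K (coneUnion Δ F)).comap (rename (R := K) (some : V → Option V)) := by
  rw [srIdeal, Ideal.span_le]
  rintro _ ⟨S, hS, rfl⟩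
  refine Ideal.subset_span ⟨S.map Function.Embedding.some, ?_, ?_⟩
  · rintro (⟨G, hG, hGS⟩ | h)
    · have := Finset.map_injective _ hGS
      exact hS (this ▸ hG)
    · refine hS (hΔ.2 F hF S fun v hv => ?_)
      have := h (Finset.mem_map_of_mem Function.Embedding.some hv)
      simpa using this
  · simp [map_prod]

lemma cone_mul_mem {V : Type*} [DecidableEq V] (K : Type*) [Field K]
    (Δ : Set (Finset V)) (F : Finset V) (v : V) (hv : v ∉ F) :
    (X none * X (some v) : MvPolynomial (Option V) K) ∈ srIdeal K (coneUnion Δ F) := by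
  refine Ideal.subset_span ⟨{none, some v}, ?_, ?_⟩
  · rintro (⟨G, hG, hGS⟩ | h)
    · have : none ∈ G.map Function.Embedding.some := by
        have h0 : G.map Function.Embedding.some = {none, some v} := hGS
        rw [h0]; simp
      simp at this
    · have h1 : some v ∈ insert none (F.map Function.Embedding.some) := h (by simp)
      simp [hv] at h1
  · simp

lemma cone_le {V : Type*} [DecidableEq V] (K : Type*) [Field K]
    (Δ : Set (Finset V)) (F : Finset V) (p : Ideal (MvPolynomial (Option V) K))
    (h1 : srIdeal K Δ ≤ p.comap (rename (R := K) (some : V → Option V)))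
    (h2 : X none ∈ p ∨ ∀ v, v ∉ F → X (some v) ∈ p) :
    srIdeal K (coneUnion Δ F) ≤ p := by
  rw [srIdeal, Ideal.span_le]
  rintro _ ⟨S, hS, rfl⟩
  by_cases hn : none ∈ S
  · rcases h2 with h2 | h2
    · exact Ideal.mem_of_dvd _ (Finset.dvd_prod_of_mem _ hn) h2
    · have : ¬ S ⊆ insert none (F.map Function.Embedding.some) := fun h => hS (Or.inr h)
      obtain ⟨w, hwS, hw⟩ := Finset.not_subset.1 this
      cases w with
      | none => simp at hw
      | some v =>
        refine Ideal.mem_of_dvd _ (Finset.dvd_prod_of_mem _ hwS) (h2 v ?_)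
        simpa using hw
  · have hT : S.eraseNone.map Function.Embedding.some = S := by
      rw [Finset.map_some_eraseNone, Finset.erase_eq_of_notMem hn]
    have hTΔ : S.eraseNone ∉ Δ := fun h => hS (Or.inl ⟨_, h, hT⟩)
    have := h1 (Ideal.subset_span ⟨_, hTΔ, rfl⟩)
    rw [Ideal.mem_comap] at this
    change ∏ v ∈ S, X v ∈ p
    rw [← hT, Finset.prod_map]
    simpa [map_prod] using this

lemma exists_yz {V : Type*} [Fintype V] [DecidableEq V] (K : Type*) [Field K]
    (Δ : Set (Finset V)) (hΔ : IsSimplicialComplex Δ) (F : Finset V) (hF : F ∈ Δ)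
    {r : ℕ} (a : Fin r → MvPolynomial V K)
    (ha : (Ideal.span (Set.range a)).radical = (srIdeal K Δ).radical)
    (N : ℕ) (hr : r ≤ N) (hN : Fintype.card V - F.card ≤ N + 1) :
    ∃ (y : Fin N → MvPolynomial V K) (z : MvPolynomial V K),
      (∀ i, a i ∈ Ideal.span (Set.range y)) ∧
      (∀ i, y i = 0 ∨ ∃ v, v ∉ F ∧ y i = X v) ∧ (z = 0 ∨ ∃ v, v ∉ F ∧ z = X v) ∧
      ∀ v, v ∉ F → X v = z ∨ ∃ i, X v = y i := by
  have haG : ∀ G ∈ Δ, ∀ i, a i ∈ facePrime K G := by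
    intro G hG i
    have hp := facePrime_isPrime K G
    have h1 : a i ∈ (srIdeal K Δ).radical := by
      rw [← ha]
      exact Ideal.le_radical (Ideal.subset_span ⟨i, rfl⟩)
    exact (hp.radical_le_iff).2 (srIdeal_le_facePrime K Δ hΔ G hG) h1
  by_cases hfac : IsFacet Δ F
  · have hm := facet_card_le K Δ hΔ F hfac a ha
    obtain ⟨y, hy1, hy2⟩ := aux_pad ((Fᶜ).map ⟨X (R := K), X_injective⟩) N
      (by rw [Finset.card_map, Finset.card_compl]; omega)
    have hv : ∀ v, v ∉ F → ∃ i, y i = X v := fun v hv => hy1 _ (by simpa using hv)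
    refine ⟨y, 0, fun i => ?_, fun i => ?_, Or.inl rfl, fun v hvF => ?_⟩
    · have : facePrime K F ≤ Ideal.span (Set.range y) := by
        rw [facePrime]
        apply Ideal.span_mono
        rintro _ ⟨v, hvF, rfl⟩
        exact hv v hvF
      exact this (haG F hF i)
    · refine (hy2 i).imp id fun h => ?_
      obtain ⟨v, hvF, h⟩ := Finset.mem_map.1 h
      exact ⟨v, by simpa using hvF, h.symm⟩
    · obtain ⟨i, hi⟩ := hv v hvF
      exact Or.inr ⟨i, hi.symm⟩
  · have : ∃ G ∈ Δ, F ⊆ G ∧ F ≠ G := by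
      by_contra hcon
      push Not at hcon
      exact hfac ⟨hF, hcon⟩
    obtain ⟨G, hG, hFG, hne⟩ := this
    obtain ⟨w, hwG, hwF⟩ : ∃ w ∈ G, w ∉ F := by
      by_contra hcon
      push Not at hcon
      exact hne (hFG.antisymm hcon)
    obtain ⟨y, hy1, hy2⟩ := aux_pad (((insert w F)ᶜ).map ⟨X (R := K), X_injective⟩) N
      (by rw [Finset.card_map, Finset.card_compl, Finset.card_insert_of_notMem hwF]; omega)
    have hv : ∀ v, v ∉ insert w F → ∃ i, y i = X v := fun v hv => hy1 _ (by simpa using hv)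
    refine ⟨y, X w, fun i => ?_, fun i => ?_, Or.inr ⟨w, hwF, rfl⟩, fun v hvF => ?_⟩
    · have : facePrime K G ≤ Ideal.span (Set.range y) := by
        rw [facePrime]
        apply Ideal.span_mono
        rintro _ ⟨v, hvG, rfl⟩
        refine hv v fun h => hvG ?_
        rcases Finset.mem_insert.1 h with rfl | h
        · exact hwG
        · exact hFG h
      exact this (haG G hG i)
    · refine (hy2 i).imp id fun h => ?_
      obtain ⟨v, hvF, h⟩ := Finset.mem_map.1 h
      refine ⟨v, fun h => ?_, h.symm⟩
      simp [h] at hvF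
    · by_cases hvw : v = w
      · exact Or.inl (by rw [hvw])
      · obtain ⟨i, hi⟩ := hv v (by simp [hvw, hvF])
        exact Or.inr ⟨i, hi.symm⟩

/-- for `K` algebraically closed and `F` a face of `Δ`,
`ara I_{Δ'} ≤ max (ara I_Δ + 1) (n − |F|)` where `Δ' = Δ ∪ co_{x₀}F`. -/
theorem ara_coneUnion_le {V : Type*} [Fintype V] [DecidableEq V]
    (K : Type*) [Field K] [IsAlgClosed K]
    (Δ : Set (Finset V)) (hΔ : IsSimplicialComplex Δ) (F : Finset V) (hF : F ∈ Δ) :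
    ara (srIdeal K (coneUnion Δ F)) ≤
      max (ara (srIdeal K Δ) + 1) (Fintype.card V - F.card) := by
  classical
  obtain ⟨a, ha⟩ := ara_spec K Δ
  generalize ara (srIdeal K Δ) = r at a ha ⊢
  obtain ⟨N, hN⟩ : ∃ N, max (r + 1) (Fintype.card V - F.card) = N + 1 :=
    ⟨max (r + 1) (Fintype.card V - F.card) - 1, by omega⟩
  rw [hN]
  obtain ⟨y, z, hay, hy, hz, hyz⟩ :=
    exists_yz K Δ hΔ F hF a ha N (by omega) (by omega)
  obtain ⟨a', ha1, ha2⟩ := aux_pad (Finset.univ.image a) N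
    (Finset.card_image_le.trans (by simp; omega))
  let φ := rename (R := K) (some : V → Option V)
  have ha'y : ∀ i, φ (a' i) ∈ Ideal.span (Set.range fun i => φ (y i)) := by
    intro i
    have h1 : a' i ∈ Ideal.span (Set.range y) := by
      rcases ha2 i with h | h
      · rw [h]; exact Ideal.zero_mem _
      · obtain ⟨j, _, hj⟩ := Finset.mem_image.1 h
        rw [← hj]; exact hay j
    have h2 := Ideal.mem_map_of_mem φ h1
    rw [Ideal.map_span, ← Set.range_comp] at h2
    exact h2
  obtain ⟨b, hb1, hb2⟩ := aux_elements (X none) (φ z) (fun i => φ (a' i)) (fun i => φ (y i)) ha'y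
  refine Nat.sInf_le ⟨b, le_antisymm ?_ ?_⟩
  · rw [Ideal.radical_le_radical_iff, Ideal.span_le]
    rintro _ ⟨i, rfl⟩
    refine hb1 _ ?_ ?_ ?_ i
    · intro i
      rcases ha2 i with h | h
      · simp [h]
      · obtain ⟨j, _, hj⟩ := Finset.mem_image.1 h
        have h1 : a j ∈ (srIdeal K Δ).radical := by
          rw [← ha]
          exact Ideal.le_radical (Ideal.subset_span ⟨j, rfl⟩)
        obtain ⟨n, hn⟩ := h1
        refine ⟨n, ?_⟩
        have h2 := map_mem_cone K Δ hΔ F hF hn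
        rw [Ideal.mem_comap, map_pow] at h2
        simp only [← hj]
        exact h2
    · intro i
      rcases hy i with h | ⟨v, hv, h⟩
      · simp [h]
      · simp only [h, φ, rename_X]
        exact Ideal.le_radical (cone_mul_mem K Δ F v hv)
    · rcases hz with h | ⟨v, hv, h⟩
      · simp [h]
      · simp only [h, φ, rename_X]
        exact Ideal.le_radical (cone_mul_mem K Δ F v hv)
  · rw [Ideal.radical_le_radical_iff, Ideal.radical_eq_sInf (Ideal.span (Set.range b))]
    refine le_sInf ?_
    rintro p ⟨hbp, hp⟩
    obtain ⟨h1, h2⟩ := hb2 p hp fun i => hbp (Ideal.subset_span ⟨i, rfl⟩)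
    apply cone_le
    · have hp' : (p.comap φ).IsPrime := Ideal.comap_isPrime _ _
      refine Ideal.le_radical.trans (ha ▸ (hp'.radical_le_iff).2 ?_)
      rw [Ideal.span_le]
      rintro _ ⟨j, rfl⟩
      obtain ⟨i, hi⟩ := ha1 (a j) (Finset.mem_image_of_mem _ (Finset.mem_univ _))
      rw [← hi]
      exact h1 i
    · refine h2.imp id ?_
      rintro ⟨hzp, hyp⟩ v hv
      rcases hyz v hv with h | ⟨i, h⟩
      · rw [← h] at hzp
        simpa [φ] using hzp
      · have := hyp i
        simp only [← h] at this
        simpa [φ] using this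
end

section
/- Let K be an algebraically closed field and Δ a simplicial complex on X = {x_1,...,x_n} that is not a simplex. If F is a facet of Δ, I_Δ is a set-theoretic complete intersection, and Δ' = Δ ∪ co_{x_0}F, then ara I_{Δ'} = ara I_Δ + 1. -/
open MvPolynomial

section Helpers

lemma hlp_ker {W K : Type*} [Field K] [DecidableEq W] (T : Set W) [DecidablePred (· ∈ T)] :
    RingHom.ker (aeval (fun v => if v ∈ T then (0 : MvPolynomial W K) else X v) :
      MvPolynomial W K →ₐ[K] MvPolynomial W K) = Ideal.span (X '' T) := by
  set φ : MvPolynomial W K →ₐ[K] MvPolynomial W K :=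
    aeval (fun v => if v ∈ T then (0 : MvPolynomial W K) else X v) with hφ
  apply le_antisymm
  · have key : ∀ f : MvPolynomial W K, f - φ f ∈ Ideal.span (X '' T : Set (MvPolynomial W K)) := by
      intro f
      induction f using MvPolynomial.induction_on with
      | C a => simp [hφ]
      | add p q hp hq =>
        have := Ideal.add_mem _ hp hq
        rw [map_add]; convert this using 1; ring
      | mul_X p v hp =>
        rw [map_mul]
        have h1 : p * X v - φ p * φ (X v) = X v * (p - φ p) + φ p * (X v - φ (X v)) := by ring
        rw [h1]
        refine Ideal.add_mem _ (Ideal.mul_mem_left _ _ hp) (Ideal.mul_mem_left _ _ ?_)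
        by_cases hv : v ∈ T
        · simp only [hφ, aeval_X, if_pos hv, sub_zero]
          exact Ideal.subset_span ⟨v, hv, rfl⟩
        · simp [hφ, hv]
    intro f hf
    have := key f
    rw [RingHom.mem_ker] at hf
    have hf' : φ f = 0 := hf
    rwa [hf', sub_zero] at this
  · rw [Ideal.span_le]
    rintro _ ⟨v, hv, rfl⟩
    simp [hφ, hv]

lemma hlp_prime {W K : Type*} [Field K] (T : Set W) :
    (Ideal.span (X '' T : Set (MvPolynomial W K))).IsPrime := by
  classical
  rw [← hlp_ker]
  exact RingHom.ker_isPrime _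

lemma hlp_X_mem {W K : Type*} [Field K] (T : Set W) (v : W) :
    (X v : MvPolynomial W K) ∈ Ideal.span (X '' T : Set (MvPolynomial W K)) ↔ v ∈ T := by
  classical
  constructor
  · intro h
    by_contra hv
    rw [← hlp_ker, RingHom.mem_ker] at h
    simp [hv] at h
  · intro h
    exact Ideal.subset_span ⟨v, h, rfl⟩

lemma hlp_height_ge {W K : Type*} [Field K] (T : Finset W) :
    (T.card : ℕ∞) ≤ (Ideal.span (X '' (T : Set W) : Set (MvPolynomial W K))).height := by
  classical
  induction T using Finset.induction_on with
  | empty => simp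
  | insert v T hv ih =>
    have := hlp_prime (K := K) (T : Set W)
    have := hlp_prime (K := K) ((insert v T : Finset W) : Set W)
    have hlt : Ideal.span (X '' (T : Set W) : Set (MvPolynomial W K)) <
        Ideal.span (X '' ((insert v T : Finset W) : Set W) : Set (MvPolynomial W K)) := by
      refine lt_of_le_of_ne (Ideal.span_mono (Set.image_mono (by simp))) ?_
      intro h
      have h1 : (X v : MvPolynomial W K) ∈ Ideal.span (X '' ((insert v T : Finset W) : Set W)) := by
        rw [hlp_X_mem]; simp
      rw [← h, hlp_X_mem] at h1
      exact hv (by simpa using h1)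
    have := Ideal.height_add_one_le_of_lt_of_isPrime hlt
    rw [Finset.card_insert_of_notMem hv]
    rw [Nat.cast_add, Nat.cast_one]
    exact le_trans (add_le_add_left ih 1) this

lemma hlp_krull {R : Type*} [CommRing R] [IsNoetherianRing R] {J P : Ideal R}
    (hP : P ∈ J.minimalPrimes) {t : ℕ} (b : Fin t → R)
    (hb : (Ideal.span (Set.range b)).radical = J.radical) : P.height ≤ t := by
  have h1 : P ∈ (Ideal.span (Set.range b)).minimalPrimes := by
    rw [← Ideal.radical_minimalPrimes, hb, Ideal.radical_minimalPrimes]; exact hP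
  refine (Ideal.height_le_card_of_mem_minimalPrimes_span (Set.finite_range b) h1).trans ?_
  have : (Set.range b).ncard ≤ t := by
    rw [← Set.image_univ]
    refine (Set.ncard_image_le Set.finite_univ).trans ?_
    simp [Set.ncard_univ]
  exact_mod_cast this

lemma hlp_facePrime_eq {W K : Type*} [Fintype W] [DecidableEq W] [Field K] (G : Finset W) :
    facePrime K G = Ideal.span (X '' ((Gᶜ : Finset W) : Set W)) := by
  unfold facePrime
  congr 2
  ext v; simp

lemma hlp_face_prime {W K : Type*} [DecidableEq W] [Field K] (G : Finset W) :
    (facePrime K G).IsPrime := hlp_prime _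

lemma hlp_face_X {W K : Type*} [DecidableEq W] [Field K] (G : Finset W) (v : W) :
    (X v : MvPolynomial W K) ∈ facePrime K G ↔ v ∉ G := hlp_X_mem _ _

lemma hlp_face_le {W K : Type*} [DecidableEq W] [Field K] {Δ : Set (Finset W)}
    (hd : ∀ F ∈ Δ, ∀ G ⊆ F, G ∈ Δ) {G : Finset W} (hG : G ∈ Δ) :
    srIdeal K Δ ≤ facePrime K G := by
  unfold srIdeal
  rw [Ideal.span_le]
  rintro _ ⟨S, hS, rfl⟩
  have : ¬ S ⊆ G := fun h => hS (hd G hG S h)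
  obtain ⟨v, hv, hvG⟩ := Finset.not_subset.1 this
  exact Ideal.mem_of_dvd _ (Finset.dvd_prod_of_mem _ hv) ((hlp_face_X G v).2 hvG)

lemma hlp_face_min {W K : Type*} [DecidableEq W] [Field K] {Δ : Set (Finset W)}
    (hd : ∀ F ∈ Δ, ∀ G ⊆ F, G ∈ Δ) {G : Finset W} (hG : IsFacet Δ G) :
    facePrime K G ∈ (srIdeal K Δ).minimalPrimes := by
  refine ⟨⟨hlp_face_prime G, hlp_face_le hd hG.1⟩, ?_⟩
  rintro Q ⟨hQ, hIQ⟩ hle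
  unfold facePrime
  rw [Ideal.span_le]
  rintro _ ⟨v, hv, rfl⟩
  have h1 : insert v G ∉ Δ := by
    intro h
    have := hG.2 _ h (Finset.subset_insert _ _)
    exact hv (this ▸ Finset.mem_insert_self _ _)
  have h2 : (∏ w ∈ insert v G, (X w : MvPolynomial W K)) ∈ Q :=
    hIQ (Ideal.subset_span ⟨_, h1, rfl⟩)
  obtain ⟨w, hw, hwQ⟩ := (Ideal.IsPrime.prod_mem_iff (hp := hQ)).1 h2
  rcases Finset.mem_insert.1 hw with rfl | hw
  · exact hwQ
  · exact absurd hw ((hlp_face_X G w).1 (hle hwQ))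

lemma hlp_face_height_le {W K : Type*} [Fintype W] [DecidableEq W] [Field K] (G : Finset W) :
    (facePrime K G).height ≤ ((Gᶜ : Finset W).card : ℕ∞) := by
  have h : facePrime K G ∈ (Ideal.span (X '' ((Gᶜ : Finset W) : Set W) :
      Set (MvPolynomial W K))).minimalPrimes := by
    rw [← hlp_facePrime_eq]
    have := hlp_face_prime (K := K) G
    rw [Ideal.minimalPrimes_eq_subsingleton_self]
    exact rfl
  refine (Ideal.height_le_card_of_mem_minimalPrimes_span (Set.toFinite _) h).trans ?_
  have := Set.ncard_image_le (f := (X : W → MvPolynomial W K)) (Finset.finite_toSet (Gᶜ : Finset W))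
  rw [Set.ncard_coe_finset] at this
  exact_mod_cast this

lemma hlp_ara_spec {W K : Type*} [Fintype W] [Field K] (J : Ideal (MvPolynomial W K)) :
    ∃ a : Fin (ara J) → MvPolynomial W K, (Ideal.span (Set.range a)).radical = J.radical := by
  refine Nat.sInf_mem
    (s := {s : ℕ | ∃ a : Fin s → MvPolynomial W K,
      (Ideal.span (Set.range a)).radical = J.radical}) ?_
  obtain ⟨S, hS⟩ := (isNoetherianRing_iff_ideal_fg _).1
    (inferInstance : IsNoetherianRing (MvPolynomial W K)) J
  refine ⟨S.card, fun i => (S.equivFin.symm i : MvPolynomial W K), ?_⟩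
  congr 1
  rw [← hS]
  congr 1
  ext x
  constructor
  · rintro ⟨i, rfl⟩; exact (S.equivFin.symm i).2
  · intro hx; exact ⟨S.equivFin ⟨x, hx⟩, by simp⟩

lemma hlp_exists_facet {W : Type*} [Fintype W] {Δ : Set (Finset W)} {S : Finset W}
    (hS : S ∈ Δ) : ∃ G, S ⊆ G ∧ IsFacet Δ G := by
  obtain ⟨G, hSG, hG⟩ := (Set.toFinite Δ).exists_le_maximal hS
  exact ⟨G, hSG, hG.1, fun H hH hGH => le_antisymm hGH (hG.2 hH hGH)⟩

lemma hlp_cone_down {V : Type*} [DecidableEq V] {Δ : Set (Finset V)}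
    (hd : ∀ F ∈ Δ, ∀ G ⊆ F, G ∈ Δ) (F : Finset V) :
    ∀ A ∈ coneUnion Δ F, ∀ B ⊆ A, B ∈ coneUnion Δ F := by
  rintro A (⟨G, hG, rfl⟩ | hA) B hB
  · left
    obtain ⟨H, hH, rfl⟩ := Finset.subset_map_iff.1 hB
    exact ⟨H, hd G hG H hH, rfl⟩
  · right; exact hB.trans hA

lemma hlp_map_mem_cone {V : Type*} [DecidableEq V] {Δ : Set (Finset V)}
    (hd : ∀ F ∈ Δ, ∀ G ⊆ F, G ∈ Δ) {F : Finset V} (hF : F ∈ Δ) (S : Finset V) :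
    S.map Function.Embedding.some ∈ coneUnion Δ F ↔ S ∈ Δ := by
  constructor
  · rintro (⟨G, hG, h⟩ | h)
    · rw [← Finset.map_injective _ h]; exact hG
    · refine hd F hF S fun v hv => ?_
      have := h (Finset.mem_map_of_mem _ hv)
      simpa using this
  · intro h; left; exact ⟨S, h, rfl⟩

lemma hlp_none_mem_cone {V : Type*} [DecidableEq V] {Δ : Set (Finset V)}
    {F : Finset V} {S : Finset (Option V)} (hS : S ∈ coneUnion Δ F) (hn : none ∈ S) :
    S ⊆ insert none (F.map Function.Embedding.some) := by
  rcases hS with ⟨G, hG, rfl⟩ | h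
  · simp at hn
  · exact h

/-- Facets of `Δ` not contained in `F` remain facets. -/
lemma hlp_facet_cone {V : Type*} [DecidableEq V] {Δ : Set (Finset V)}
    (hd : ∀ F ∈ Δ, ∀ G ⊆ F, G ∈ Δ) {F G : Finset V} (hF : F ∈ Δ) (hG : IsFacet Δ G)
    (hGF : ¬ G ⊆ F) : IsFacet (coneUnion Δ F) (G.map Function.Embedding.some) := by
  refine ⟨(hlp_map_mem_cone hd hF G).2 hG.1, ?_⟩
  rintro A (⟨H, hH, rfl⟩ | hA) hGA
  · rw [hG.2 H hH (Finset.map_subset_map.1 hGA)]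
  · exfalso
    apply hGF
    intro v hv
    have := hA (hGA (Finset.mem_map_of_mem _ hv))
    simpa using this

/-- Primes over the Stanley-Reisner ideal of the cone union. -/
lemma hlp_cone_le {V K : Type*} [DecidableEq V] [Field K] {Δ : Set (Finset V)}
    (hd : ∀ F ∈ Δ, ∀ G ⊆ F, G ∈ Δ) {F : Finset V} (hF : F ∈ Δ)
    (p : Ideal (MvPolynomial (Option V) K)) :
    srIdeal K (coneUnion Δ F) ≤ p ↔
      srIdeal K Δ ≤ p.comap (rename (some : V → Option V) :
        MvPolynomial V K →ₐ[K] MvPolynomial (Option V) K) ∧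
      ∀ v ∉ F, (X none * X (some v) : MvPolynomial (Option V) K) ∈ p := by
  have hprod : ∀ S : Finset V, rename (some : V → Option V) (∏ v ∈ S, (X v : MvPolynomial V K))
      = ∏ v ∈ S.map Function.Embedding.some, X v := by
    intro S; simp [Finset.prod_map]
  constructor
  · intro h
    constructor
    · unfold srIdeal
      rw [Ideal.span_le]
      rintro _ ⟨S, hS, rfl⟩
      have : (∏ v ∈ S.map Function.Embedding.some, (X v : MvPolynomial (Option V) K)) ∈ p :=
        h (Ideal.subset_span ⟨_, fun h' => hS ((hlp_map_mem_cone hd hF S).1 h'), rfl⟩)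
      rw [← hprod] at this
      exact this
    · intro v hv
      have : (∏ w ∈ ({none, some v} : Finset (Option V)),
          (X w : MvPolynomial (Option V) K)) ∈ p := by
        refine h (Ideal.subset_span ⟨_, fun h' => hv ?_, rfl⟩)
        have := hlp_none_mem_cone h' (by simp) (show some v ∈ _ by simp)
        simpa using this
      rwa [Finset.prod_pair (by simp)] at this
  · rintro ⟨h1, h2⟩
    unfold srIdeal
    rw [Ideal.span_le]
    rintro _ ⟨S, hS, rfl⟩
    by_cases hn : none ∈ S
    · have : ¬ S ⊆ insert none (F.map Function.Embedding.some) := fun h => hS (Or.inr h)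
      obtain ⟨w, hw, hw'⟩ := Finset.not_subset.1 this
      cases w with
      | none => simp at hw'
      | some v =>
        have hv : v ∉ F := by simpa using hw'
        have hsub : ({none, some v} : Finset (Option V)) ⊆ S := by
          intro u hu
          simp only [Finset.mem_insert, Finset.mem_singleton] at hu
          rcases hu with rfl | rfl <;> assumption
        refine Ideal.mem_of_dvd _ (Finset.prod_dvd_prod_of_subset _ _ _ hsub) ?_
        rw [Finset.prod_pair (by simp)]
        exact h2 v hv
    · obtain ⟨S', rfl⟩ : ∃ S' : Finset V, S = S'.map Function.Embedding.some := by
        refine ⟨Finset.eraseNone S, ?_⟩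
        rw [Finset.map_some_eraseNone, Finset.erase_eq_of_notMem hn]
      have hS' : S' ∉ Δ := fun h => hS ((hlp_map_mem_cone hd hF S').2 h)
      have := h1 (Ideal.subset_span ⟨S', hS', rfl⟩)
      rw [Ideal.mem_comap] at this
      change rename (some : V → Option V) (∏ v ∈ S', (X v : MvPolynomial V K)) ∈ p at this
      rw [hprod] at this
      exact this

lemma hlp_radical_eq {R : Type*} [CommRing R] {I J : Ideal R}
    (h : ∀ p : Ideal R, p.IsPrime → (I ≤ p ↔ J ≤ p)) : I.radical = J.radical := by
  rw [Ideal.radical_eq_sInf, Ideal.radical_eq_sInf]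
  congr 1
  ext p
  exact ⟨fun ⟨a, b⟩ => ⟨(h p b).1 a, b⟩, fun ⟨a, b⟩ => ⟨(h p b).2 a, b⟩⟩

/-- The determinantal construction. -/
lemma hlp_construct {R : Type*} [CommRing R] {s : ℕ} (b y : Fin s → R) (x : R)
    (hb : ∀ i, b i ∈ Ideal.span (Set.range y)) :
    ∃ c : Fin (s + 1) → R, ∀ p : Ideal R, p.IsPrime →
      (Ideal.span (Set.range c) ≤ p ↔ (∀ i, b i ∈ p) ∧ ∀ j, x * y j ∈ p) := by
  have hM : ∀ i, ∃ m : Fin s → R, ∑ j, m j * y j = b i := fun i =>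
    (Ideal.mem_span_range_iff_exists_fun).1 (hb i)
  choose M hM using hM
  set A : Matrix (Fin s) (Fin s) R :=
    Matrix.of (fun i j => b i * M i j) + x • (1 : Matrix (Fin s) (Fin s) R) with hA
  have hAy : ∀ i, (A.mulVec y) i = b i ^ 2 + x * y i := by
    intro i
    rw [hA, Matrix.add_mulVec, Matrix.smul_mulVec, Matrix.one_mulVec]
    simp only [Pi.add_apply, Pi.smul_apply, smul_eq_mul]
    congr 1
    simp only [Matrix.mulVec, dotProduct, Matrix.of_apply, mul_assoc]
    rw [← Finset.mul_sum, hM, sq]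
  have hπ : x ^ s - A.det ∈ Ideal.span (Set.range y) := by
    rw [← Ideal.Quotient.eq, RingHom.map_det, map_pow]
    have : (Ideal.Quotient.mk (Ideal.span (Set.range y))).mapMatrix A
        = (Ideal.Quotient.mk (Ideal.span (Set.range y)) x) •
          (1 : Matrix (Fin s) (Fin s) (R ⧸ Ideal.span (Set.range y))) := by
      ext i j
      have h0 : Ideal.Quotient.mk (Ideal.span (Set.range y)) (b i) = 0 :=
        Ideal.Quotient.eq_zero_iff_mem.2 (hb i)
      simp only [hA, RingHom.mapMatrix_apply, Matrix.map_apply, Matrix.add_apply, Matrix.of_apply,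
        Matrix.smul_apply, Matrix.one_apply, smul_eq_mul, map_add, map_mul, h0, zero_mul, zero_add]
      split_ifs <;> simp
    rw [this, Matrix.det_smul]
    simp
  refine ⟨Fin.cons (x * (x ^ s - A.det)) (fun i => b i ^ 2 + x * y i), fun p hp => ?_⟩
  rw [Ideal.span_le, Set.range_subset_iff, Fin.forall_fin_succ]
  simp only [Fin.cons_zero, Fin.cons_succ, SetLike.mem_coe]
  constructor
  · rintro ⟨h0, hq⟩
    have hδ : ∀ j, A.det * y j ∈ p := by
      intro j
      have h1 : (A.adjugate.mulVec (A.mulVec y)) j = A.det * y j := by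
        rw [Matrix.mulVec_mulVec, Matrix.adjugate_mul, Matrix.smul_mulVec, Matrix.one_mulVec]
        rfl
      rw [← h1]
      simp only [Matrix.mulVec, dotProduct]
      refine Ideal.sum_mem _ fun i _ => Ideal.mul_mem_left _ _ ?_
      have := hAy i
      simp only [Matrix.mulVec, dotProduct] at this
      rw [this]; exact hq i
    by_cases hy : ∀ j, y j ∈ p
    · refine ⟨fun i => ?_, fun j => Ideal.mul_mem_left _ _ (hy j)⟩
      have : Ideal.span (Set.range y) ≤ p := by
        rw [Ideal.span_le]; rintro _ ⟨j, rfl⟩; exact hy j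
      exact this (hb i)
    · push Not at hy
      obtain ⟨j, hj⟩ := hy
      have hd : A.det ∈ p := (hp.mem_or_mem (hδ j)).resolve_right hj
      have hx : x ∈ p := by
        apply hp.mem_of_pow_mem (s + 1)
        have := Ideal.add_mem _ h0 (Ideal.mul_mem_left p x hd)
        convert this using 1; ring
      refine ⟨fun i => ?_, fun j => Ideal.mul_mem_right _ _ hx⟩
      apply hp.mem_of_pow_mem 2
      exact (Ideal.add_mem_iff_left _ (Ideal.mul_mem_right _ _ hx)).1 (hq i)
  · rintro ⟨h1, h2⟩
    refine ⟨?_, fun i => Ideal.add_mem _ (Ideal.pow_mem_of_mem _ (h1 i) 2 (by norm_num)) (h2 i)⟩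
    obtain ⟨m, hm⟩ := (Ideal.mem_span_range_iff_exists_fun).1 hπ
    rw [← hm, Finset.mul_sum]
    refine Ideal.sum_mem _ fun j _ => ?_
    have := Ideal.mul_mem_left p (m j) (h2 j)
    convert this using 1; ring

end Helpers

/-- for `K` algebraically closed and `Δ` not a simplex, if `F` is a facet
of `Δ` and `I_Δ` is a set-theoretic complete intersection, then
`ara I_{Δ'} = ara I_Δ + 1` where `Δ' = Δ ∪ co_{x₀}F`. -/
theorem ara_coneUnion_facet {V : Type*} [Fintype V] [DecidableEq V]
    (K : Type*) [Field K] [IsAlgClosed K]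
    (Δ : Set (Finset V)) (hΔ : IsSimplicialComplex Δ)
    (hsimplex : Δ ≠ Set.univ)
    (F : Finset V) (hF : IsFacet Δ F)
    (hstci : (ara (srIdeal K Δ) : ℕ∞) = idealHeight (srIdeal K Δ)) :
    ara (srIdeal K (coneUnion Δ F)) = ara (srIdeal K Δ) + 1 := by
  obtain ⟨hsing, hd⟩ := hΔ
  have hFne : ∃ v, v ∉ F := by
    by_contra h
    push Not at h
    exact hsimplex (Set.eq_univ_of_forall fun S => hd F hF.1 S fun v _ => h v)
  obtain ⟨v0, hv0⟩ := hFne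
  have hspec := hlp_ara_spec (srIdeal K Δ)
  set s := ara (srIdeal K Δ) with hs
  obtain ⟨a, ha⟩ := hspec
  have hale : ∀ p : Ideal (MvPolynomial V K), p.IsPrime →
      ((∀ i, a i ∈ p) ↔ srIdeal K Δ ≤ p) := by
    intro p hp
    rw [← hp.radical_le_iff, ← ha, hp.radical_le_iff, Ideal.span_le, Set.range_subset_iff]
    rfl
  apply le_antisymm
  · -- upper bound
    have hT : ((Fᶜ : Finset V).card : ℕ∞) ≤ s := by
      refine le_trans ?_ (hlp_krull (hlp_face_min (K := K) hd hF) a ha)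
      rw [hlp_facePrime_eq]
      exact hlp_height_ge _
    have hT' : Fintype.card (Fᶜ : Finset V) ≤ Fintype.card (Fin s) := by
      rw [Fintype.card_coe, Fintype.card_fin]
      exact_mod_cast hT
    obtain ⟨e⟩ := Function.Embedding.nonempty_of_card_le hT'
    have : Nonempty (Fᶜ : Finset V) := ⟨⟨v0, by simpa using hv0⟩⟩
    have hsurj : Function.Surjective (Function.invFun e) := Function.invFun_surjective e.injective
    generalize Function.invFun e = f at hsurj
    set y : Fin s → MvPolynomial (Option V) K := fun i => X (some (f i : V)) with hy
    have hb : ∀ i, rename (some : V → Option V) (a i) ∈ Ideal.span (Set.range y) := by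
      intro i
      have h1 : a i ∈ facePrime K F :=
        (hale _ (hlp_face_prime F)).2 (hlp_face_le hd hF.1) i
      have h2 : facePrime K F ≤ (Ideal.span (Set.range y)).comap (rename (some : V → Option V) :
        MvPolynomial V K →ₐ[K] MvPolynomial (Option V) K) := by
        unfold facePrime
        rw [Ideal.span_le]
        rintro _ ⟨v, hv, rfl⟩
        obtain ⟨j, hj⟩ := hsurj ⟨v, by simpa using hv⟩
        refine Ideal.subset_span ⟨j, ?_⟩
        simp [hy, hj]
      exact h2 h1
    obtain ⟨c, hc⟩ := hlp_construct (fun i => rename (some : V → Option V) (a i)) y (X none) hb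
    refine Nat.sInf_le ⟨c, hlp_radical_eq fun p hp => ?_⟩
    rw [hc p hp, hlp_cone_le hd hF.1, ← hale _ (Ideal.comap_isPrime _ p)]
    refine and_congr Iff.rfl ⟨fun h v hv => ?_, fun h j => h _ ?_⟩
    · obtain ⟨j, hj⟩ := hsurj ⟨v, by simpa using hv⟩
      have := h j
      simpa [hy, hj] using this
    · exact Finset.mem_compl.1 (f j).2
  · -- lower bound
    obtain ⟨G, hvG, hG⟩ := hlp_exists_facet (hsing v0)
    have hGF : ¬ G ⊆ F := fun h => hv0 (h (hvG (by simp)))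
    have h1 : (s : ℕ∞) ≤ ((Gᶜ : Finset V).card : ℕ∞) := by
      rw [hstci]
      refine le_trans (iInf_le _ ⟨⟨facePrime K G, hlp_face_prime G⟩, hlp_face_le hd hG.1⟩) ?_
      rw [← PrimeSpectrum.height_eq_orderHeight]
      exact hlp_face_height_le G
    obtain ⟨c, hc⟩ := hlp_ara_spec (srIdeal K (coneUnion Δ F))
    have h2 := hlp_krull (hlp_face_min (K := K) (hlp_cone_down hd F)
      (hlp_facet_cone hd hF.1 hG hGF)) c hc
    rw [hlp_facePrime_eq] at h2
    have h3 := (hlp_height_ge (K := K) _).trans h2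
    have h4 : ((G.map Function.Embedding.some)ᶜ : Finset (Option V)).card ≤
      ara (srIdeal K (coneUnion Δ F)) := by exact_mod_cast h3
    have h5 : s ≤ (Gᶜ : Finset V).card := by exact_mod_cast h1
    rw [Finset.card_compl] at h4 h5
    have := Finset.card_le_univ G
    simp only [Finset.card_map, Fintype.card_option] at h4
    omega
end

section
/- Let K be algebraically closed, Δ a simplicial complex on X = {x_1,...,x_n} with F ⊆ G faces of Δ, where G = {x_{s+1},...,x_n} is a facet and F = {x_{t+1},...,x_n}, 1 ≤ s ≤ t < n. Suppose q_1,...,q_h generate I_Δ up to radical with q_i = Σ_{j=1}^s a_{ij}x_j and a_{ij}x_j ∈ I_Δ for all i,j, and suppose h + 1 > t. Let φ be the substitution x_k ↦ x_k^2, set q̄_i = φ(q_i) and ā_{ij} = φ(a_{ij})x_j (with ā_{ij} = 0 for j > s), let Ā = (ā_{ij})_{i,j=1,...,t} and A_1 = Ā + x_0·Id_t. Then, in R' = K[X ∪ {x_0}], I_{Δ'} = √( det A_1 − x_0^t, q̄_1 + x_0x_1, ..., q̄_t + x_0x_t, q̄_{t+1}, ..., q̄_h ), where Δ' = Δ ∪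 co_{x_0}F. In particular ara I_{Δ'} ≤ h + 1. -/
open MvPolynomial

section Stmt8

variable {n : ℕ} (K : Type*) [Field K]

/-- The substitution `φ : xₖ ↦ xₖ²`. -/
noncomputable def sqSub : MvPolynomial (Fin n) K →ₐ[K] MvPolynomial (Fin n) K :=
  aeval fun v => (X v : MvPolynomial (Fin n) K) ^ 2

/-- The inclusion `R = K[x₁,…,xₙ] → R' = K[x₀,x₁,…,xₙ]`, with `none` playing
the role of the new variable `x₀`. -/
noncomputable def toR' : MvPolynomial (Fin n) K →ₐ[K] MvPolynomial (Option (Fin n)) K :=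
  rename some

theorem mem_srIdeal_of_proj {V : Type*} [DecidableEq V] (K : Type*) [Field K]
    (Δ : Set (Finset V)) (f : MvPolynomial V K)
    (hf : ∀ F ∈ Δ, aeval (fun v => if v ∈ F then (X v : MvPolynomial V K) else 0) f = 0) :
    f ∈ srIdeal K Δ := by
  have key : ∀ (F : Finset V) (m : V →₀ ℕ),
      aeval (fun v => if v ∈ F then (X v : MvPolynomial V K) else 0) (monomial m (1 : K)) =
        if m.support ⊆ F then monomial m (1 : K) else 0 := by
    intro F m
    rw [aeval_monomial, map_one, one_mul, Finsupp.prod]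
    split_ifs with hm
    · rw [monomial_eq, map_one, one_mul, Finsupp.prod]
      exact Finset.prod_congr rfl fun v hv => by rw [if_pos (hm hv)]
    · obtain ⟨v, hv, hvF⟩ := Finset.not_subset.mp hm
      refine Finset.prod_eq_zero hv ?_
      rw [if_neg hvF, zero_pow (Finsupp.mem_support_iff.mp hv)]
  have hcoeff : ∀ (F : Finset V) (m : V →₀ ℕ), m.support ⊆ F →
      coeff m (aeval (fun v => if v ∈ F then (X v : MvPolynomial V K) else 0) f) = coeff m f := by
    intro F m hm
    induction f using MvPolynomial.induction_on' with
    | monomial u c =>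
      have : (monomial u c : MvPolynomial V K) = c • monomial u 1 := by
        rw [smul_monomial, smul_eq_mul, mul_one]
      rw [this, map_smul, key]
      split_ifs with hu
      · rfl
      · have : u ≠ m := fun h => hu (h ▸ hm)
        simp [coeff_monomial, this]
    | add p q hp hq =>
      have : ∀ p : MvPolynomial V K, coeff m (aeval (fun v => if v ∈ F then (X v : MvPolynomial V K) else 0) p) = coeff m p := by
        intro p
        induction p using MvPolynomial.induction_on' with
        | monomial u c =>
          have : (monomial u c : MvPolynomial V K) = c • monomial u 1 := by
            rw [smul_monomial, smul_eq_mul, mul_one]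
          rw [this, map_smul, key]
          split_ifs with hu
          · rfl
          · have : u ≠ m := fun h => hu (h ▸ hm)
            simp [coeff_monomial, this]
        | add p q hp hq => rw [map_add, coeff_add, coeff_add, hp, hq]
      exact this _
  rw [f.as_sum]
  refine Ideal.sum_mem _ fun m hm => ?_
  have hmΔ : m.support ∉ Δ := by
    intro hmem
    apply (mem_support_iff.mp hm)
    rw [← hcoeff m.support m subset_rfl, hf _ hmem, coeff_zero]
  have h1 : (∏ v ∈ m.support, (X v : MvPolynomial V K)) ∈ srIdeal K Δ :=
    Ideal.subset_span ⟨_, hmΔ, rfl⟩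
  refine Ideal.mem_of_dvd _ ?_ h1
  rw [monomial_eq, Finsupp.prod]
  exact Dvd.dvd.mul_left (Finset.prod_dvd_prod_of_dvd _ _ fun v hv =>
    dvd_pow_self _ (Finsupp.mem_support_iff.mp hv)) _

theorem srIdeal_aeval_zero {V : Type*} [DecidableEq V] (K : Type*) [Field K]
    (Δ : Set (Finset V)) {D : Type*} [CommRing D] [Algebra K D] (y : V → D)
    (hy : ∀ S, S ∉ Δ → ∏ v ∈ S, y v = 0) {f : MvPolynomial V K} (hf : f ∈ srIdeal K Δ) :
    aeval y f = 0 := by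
  have : srIdeal K Δ ≤ RingHom.ker (aeval y : MvPolynomial V K →ₐ[K] D) := by
    rw [srIdeal, Ideal.span_le]
    rintro _ ⟨S, hS, rfl⟩
    change aeval y (∏ v ∈ S, (X v : MvPolynomial V K)) = 0
    rw [map_prod]
    simpa using hy S hS
  exact this hf

/-- A vector supported on a face kills all nonface monomials. -/
theorem prod_zero_of_face {V : Type*} [DecidableEq V] {Δ : Set (Finset V)}
    (hΔ : ∀ F ∈ Δ, ∀ G ⊆ F, G ∈ Δ) {D : Type*} [CommRing D] (y : V → D)
    (F : Finset V) (hF : F ∈ Δ) (hy : ∀ v, v ∉ F → y v = 0) (S : Finset V) (hS : S ∉ Δ) :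
    ∏ v ∈ S, y v = 0 := by
  have : ¬ S ⊆ F := fun h => hS (hΔ F hF S h)
  obtain ⟨v, hv, hvF⟩ := Finset.not_subset.mp this
  exact Finset.prod_eq_zero hv (hy v hvF)

theorem coneUnion_down {V : Type*} [DecidableEq V] {Δ : Set (Finset V)}
    (hΔ : ∀ F ∈ Δ, ∀ G ⊆ F, G ∈ Δ) (F₀ : Finset V) :
    ∀ F ∈ coneUnion Δ F₀, ∀ G ⊆ F, G ∈ coneUnion Δ F₀ := by
  rintro F (⟨H, hH, rfl⟩ | hF) G hG
  · left
    obtain ⟨G', hG', rfl⟩ := Finset.subset_map_iff.mp hG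
    exact ⟨G', hΔ H hH _ hG', rfl⟩
  · right
    exact hG.trans hF

theorem aeval_toR'_sqSub {D : Type*} [CommRing D] [Algebra K D]
    (e : MvPolynomial (Option (Fin n)) K →ₐ[K] D) (p : MvPolynomial (Fin n) K) :
    e (toR' K (sqSub K p)) = aeval (fun v => e (X (some v)) ^ 2) p := by
  have : (e.comp ((toR' K).comp (sqSub K))) = aeval (fun v => e (X (some v)) ^ 2) := by
    ext v
    simp [toR', sqSub]
  exact DFunLike.congr_fun this p

theorem sum_fin_castLE {D : Type*} [CommRing D] (s t : ℕ) (hst : s ≤ t) (htn : t ≤ n)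
    (f : Fin n → D) :
    ∑ j ∈ Finset.univ.filter (fun j : Fin n => (j : ℕ) < s), f j =
      ∑ j : Fin t, if (j : ℕ) < s then f (Fin.castLE htn j) else 0 := by
  rw [← Finset.sum_filter]
  symm
  refine Finset.sum_bij (fun j _ => Fin.castLE htn j) ?_ ?_ ?_ ?_
  · intro j hj
    simpa using hj
  · intro j _ k _ hjk
    simpa using hjk
  · intro j hj
    have hj' : (j : ℕ) < s := by simpa using hj
    exact ⟨⟨j, by omega⟩, by simpa using hj', by ext; simp⟩
  · intros; rfl

theorem map_det_case1 {D : Type*} [CommRing D] [Algebra K D]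
    (e : MvPolynomial (Option (Fin n)) K →ₐ[K] D) (s t h : ℕ) (htn : t ≤ n) (hth : t ≤ h)
    (a : Fin h → Fin n → MvPolynomial (Fin n) K) :
    e (Matrix.of fun i j : Fin t =>
              toR' K (if ((j : ℕ) < s) then
                  sqSub K (a (Fin.castLE hth i) (Fin.castLE htn j)) *
                    X (Fin.castLE htn j)
                else 0) +
              if i = j then X none else 0).det =
    (Matrix.of fun i j : Fin t =>
      (if ((j : ℕ) < s) then
        aeval (fun v => e (X (some v)) ^ 2) (a (Fin.castLE hth i) (Fin.castLE htn j)) *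
          e (X (some (Fin.castLE htn j))) else 0) + if i = j then e (X none) else 0).det := by
  rw [AlgHom.map_det]
  congr 1
  ext i j
  simp only [AlgHom.mapMatrix_apply, Matrix.map_apply, Matrix.of_apply, map_add]
  congr 1
  · split_ifs
    · rw [map_mul, map_mul, aeval_toR'_sqSub]
      simp [toR']
    · simp
  · split_ifs <;> simp

/-- Case 1 of Theorem 1: here the variable `xⱼ` (for `1 ≤ j ≤ n`) is the
variable with index `j-1 : Fin n`, so `G = {x_{s+1},…,xₙ}` is the set of indices `≥ s` and
`F = {x_{t+1},…,xₙ}` the set of indices `≥ t`.  Suppose `q₁,…,q_h` generate `I_Δ` up to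
radical, `qᵢ = ∑_{j=1}^s aᵢⱼxⱼ` with `aᵢⱼxⱼ ∈ I_Δ`, and `h + 1 > t`.  With
`q̄ᵢ = φ(qᵢ)`, `āᵢⱼ = φ(aᵢⱼ)xⱼ` (zero for `j > s`), `Ā = (āᵢⱼ)_{i,j≤t}` and
`A₁ = Ā + x₀·Id_t`, the ideal `I_{Δ'}` is the radical of the ideal generated by
`det A₁ − x₀ᵗ`, `q̄ᵢ + x₀xᵢ` (`1 ≤ i ≤ t`) and `q̄ᵢ` (`t < i ≤ h`); in particular
`ara I_{Δ'} ≤ h + 1`. -/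
theorem srIdeal_coneUnion_eq_radical_case1 [IsAlgClosed K]
    (Δ : Set (Finset (Fin n))) (hΔ : IsSimplicialComplex Δ)
    (s t : ℕ) (hs : 1 ≤ s) (hst : s ≤ t) (htn : t < n)
    (hG : IsFacet Δ (Finset.univ.filter fun i : Fin n => s ≤ (i : ℕ)))
    (hF : (Finset.univ.filter fun i : Fin n => t ≤ (i : ℕ)) ∈ Δ)
    {h : ℕ} (hth : t < h + 1)
    (q : Fin h → MvPolynomial (Fin n) K) (a : Fin h → Fin n → MvPolynomial (Fin n) K)
    (hdecomp : ∀ i, q i =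
      ∑ j ∈ Finset.univ.filter (fun j : Fin n => (j : ℕ) < s), a i j * X j)
    (hmem : ∀ (i : Fin h) (j : Fin n), (j : ℕ) < s → a i j * X j ∈ srIdeal K Δ)
    (hrad : (Ideal.span (Set.range q)).radical = srIdeal K Δ) :
    srIdeal K (coneUnion Δ (Finset.univ.filter fun i : Fin n => t ≤ (i : ℕ))) =
      (Ideal.span
        (insert
          ((Matrix.of fun i j : Fin t =>
              toR' K (if ((j : ℕ) < s) then
                  sqSub K (a (Fin.castLE (Nat.lt_succ_iff.mp hth) i) (Fin.castLE htn.le j)) *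
                    X (Fin.castLE htn.le j)
                else 0) +
              if i = j then X none else 0).det - X none ^ t)
          ((Set.range fun i : Fin t =>
              toR' K (sqSub K (q (Fin.castLE (Nat.lt_succ_iff.mp hth) i))) +
                X none * X (some (Fin.castLE htn.le i))) ∪
           (Set.range fun i : {i : Fin h // t ≤ (i : ℕ)} =>
              toR' K (sqSub K (q i.1)))))).radical
    ∧ ara (srIdeal K (coneUnion Δ (Finset.univ.filter fun i : Fin n => t ≤ (i : ℕ)))) ≤
        h + 1 := by
  have hht : t ≤ h := Nat.lt_succ_iff.mp hth
  have ht1 : 1 ≤ t := hs.trans hst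
  set F₀ : Finset (Fin n) := Finset.univ.filter fun i : Fin n => t ≤ (i : ℕ) with hF₀
  have hF₀mem : ∀ i : Fin n, i ∈ F₀ ↔ t ≤ (i : ℕ) := by intro i; simp [hF₀]
  set M : Matrix (Fin t) (Fin t) (MvPolynomial (Option (Fin n)) K) :=
    (Matrix.of fun i j : Fin t =>
              toR' K (if ((j : ℕ) < s) then
                  sqSub K (a (Fin.castLE (Nat.lt_succ_iff.mp hth) i) (Fin.castLE htn.le j)) *
                    X (Fin.castLE htn.le j)
                else 0) +
              if i = j then X none else 0) with hM
  set T := (insert (M.det - X none ^ t)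
          ((Set.range fun i : Fin t =>
              toR' K (sqSub K (q (Fin.castLE (Nat.lt_succ_iff.mp hth) i))) +
                X none * X (some (Fin.castLE htn.le i))) ∪
           (Set.range fun i : {i : Fin h // t ≤ (i : ℕ)} =>
              toR' K (sqSub K (q i.1))))) with hT
  have main : srIdeal K (coneUnion Δ F₀) = (Ideal.span T).radical := by
    apply le_antisymm
    · rw [Ideal.radical_eq_sInf]
      refine le_sInf ?_
      rintro P ⟨hTP, hP⟩
      rw [Ideal.span_le] at hTP
      let e : MvPolynomial (Option (Fin n)) K →ₐ[K] (MvPolynomial (Option (Fin n)) K ⧸ P) :=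
        Ideal.Quotient.mkₐ K P
      have he : ∀ f, f ∈ P ↔ e f = 0 := fun f => Ideal.Quotient.eq_zero_iff_mem.symm
      have h1 : e M.det = e (X none) ^ t := by
        have := (he _).mp (hTP (Set.mem_insert _ _))
        rwa [map_sub, map_pow, sub_eq_zero] at this
      have h2 : ∀ i : Fin t, aeval (fun v => e (X (some v)) ^ 2) (q (Fin.castLE hht i)) +
          e (X none) * e (X (some (Fin.castLE htn.le i))) = 0 := by
        intro i
        have := (he _).mp (hTP (Set.mem_insert_of_mem _ (Or.inl ⟨i, rfl⟩)))
        rwa [map_add, map_mul, aeval_toR'_sqSub] at this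
      have h3 : ∀ i : Fin h, t ≤ (i : ℕ) → aeval (fun v => e (X (some v)) ^ 2) (q i) = 0 := by
        intro i hi
        have := (he _).mp (hTP (Set.mem_insert_of_mem _ (Or.inr ⟨⟨i, hi⟩, rfl⟩)))
        rwa [aeval_toR'_sqSub] at this
      rw [srIdeal, Ideal.span_le]
      rintro _ ⟨S, hS, rfl⟩
      change _ ∈ P
      rw [he, map_prod]
      by_cases hy : ∀ i : Fin t, e (X (some (Fin.castLE htn.le i))) = 0
      · have hS' : ¬ S ⊆ insert none (F₀.map Function.Embedding.some) := fun h => hS (Or.inr h)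
        obtain ⟨v, hv, hvF⟩ := Finset.not_subset.mp hS'
        refine Finset.prod_eq_zero hv ?_
        cases v with
        | none => simp at hvF
        | some v =>
          have hv' : ¬ t ≤ (v : ℕ) := by
            rw [← hF₀mem]
            intro hh
            exact hvF (Finset.mem_insert_of_mem (Finset.mem_map_of_mem _ hh))
          exact hy ⟨v, by omega⟩
      · have hz : e (X none) = 0 := by
          have hdet : e M.det = 0 := by
            rw [hM, map_det_case1]
            apply Matrix.exists_mulVec_eq_zero_iff.mp
            refine ⟨fun i => e (X (some (Fin.castLE htn.le i))), ?_, ?_⟩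
            · intro h0
              exact hy fun i => congrFun h0 i
            · ext i
              refine Eq.trans ?_ (h2 i)
              rw [hdecomp, map_sum, sum_fin_castLE s t hst htn.le]
              simp only [Matrix.mulVec, dotProduct, Matrix.of_apply, add_mul,
                Finset.sum_add_distrib, ite_mul, zero_mul, Finset.sum_ite_eq, Finset.mem_univ,
                if_true]
              congr 1
              refine Finset.sum_congr rfl fun j _ => ?_
              split_ifs
              · rw [map_mul, aeval_X]; ring
              · rfl
          rw [h1] at hdet
          exact eq_zero_of_pow_eq_zero hdet
        have hq : ∀ i : Fin h, aeval (fun v => e (X (some v)) ^ 2) (q i) = 0 := by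
          intro i
          by_cases hi : t ≤ (i : ℕ)
          · exact h3 i hi
          · have := h2 ⟨i, by omega⟩
            rw [hz, zero_mul, add_zero] at this
            exact this
        have hI : srIdeal K Δ ≤ RingHom.ker (aeval (fun v => e (X (some v)) ^ 2) :
            MvPolynomial (Fin n) K →ₐ[K] (MvPolynomial (Option (Fin n)) K ⧸ P)) := by
          rw [← hrad]
          refine (RingHom.ker_isPrime _).radical_le_iff.mpr ?_
          rw [Ideal.span_le]
          rintro _ ⟨i, rfl⟩
          exact hq i
        by_cases hn : none ∈ S
        · exact Finset.prod_eq_zero hn hz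
        · obtain ⟨S', rfl⟩ : ∃ S' : Finset (Fin n), S = S'.map Function.Embedding.some := by
            refine ⟨Finset.eraseNone S, ?_⟩
            rw [Finset.map_some_eraseNone, Finset.erase_eq_of_notMem hn]
          have hS' : S' ∉ Δ := fun hh => hS (Or.inl ⟨S', hh, rfl⟩)
          have := hI (Ideal.subset_span ⟨S', hS', rfl⟩)
          rw [RingHom.mem_ker, map_prod] at this
          simp only [aeval_X] at this
          rw [Finset.prod_pow] at this
          rw [Finset.prod_map]
          exact eq_zero_of_pow_eq_zero this
    · intro f hf
      obtain ⟨m, hm⟩ := hf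
      apply mem_srIdeal_of_proj
      intro H hH
      let e : MvPolynomial (Option (Fin n)) K →ₐ[K] MvPolynomial (Option (Fin n)) K :=
        aeval (fun v => if v ∈ H then (X v : MvPolynomial (Option (Fin n)) K) else 0)
      have heX : ∀ v, v ∉ H → e (X v) = 0 := by
        intro v hv
        simp [e, hv]
      have hT0 : Ideal.span T ≤ RingHom.ker e := by
        suffices hsuff : (∀ (i : Fin h) (j : Fin n), (j : ℕ) < s →
              aeval (fun v => e (X (some v)) ^ 2) (a i j) * e (X (some j)) = 0) ∧
            (∀ j : Fin t, e (X none) * e (X (some (Fin.castLE htn.le j))) = 0) by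
          obtain ⟨ha, hx⟩ := hsuff
          have hq : ∀ i : Fin h, aeval (fun v => e (X (some v)) ^ 2) (q i) = 0 := by
            intro i
            rw [hdecomp, map_sum]
            refine Finset.sum_eq_zero fun j hj => ?_
            rw [map_mul, aeval_X, sq, ← mul_assoc, ha i j (by simpa using hj), zero_mul]
          rw [Ideal.span_le]
          rintro _ (rfl | ⟨i, rfl⟩ | ⟨i, rfl⟩)
          · change e _ = 0
            rw [map_sub, map_pow, hM, map_det_case1, sub_eq_zero]
            have : (Matrix.of fun i j : Fin t =>
                (if ((j : ℕ) < s) then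
                  aeval (fun v => e (X (some v)) ^ 2) (a (Fin.castLE hht i) (Fin.castLE htn.le j)) *
                    e (X (some (Fin.castLE htn.le j))) else 0) + if i = j then e (X none) else 0) =
                Matrix.diagonal fun _ => e (X none) := by
              ext1 i j
              rw [Matrix.of_apply, Matrix.diagonal_apply]
              by_cases h1 : (j : ℕ) < s
              · rw [if_pos h1, ha _ _ h1, zero_add]
              · rw [if_neg h1, zero_add]
            rw [this, Matrix.det_diagonal]
            simp
          · change e _ = 0
            rw [map_add, map_mul, aeval_toR'_sqSub, hq, hx, add_zero]
          · change e _ = 0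
            rw [aeval_toR'_sqSub, hq]
        rcases hH with ⟨H', hH', rfl⟩ | hH
        · refine ⟨fun i j hj => ?_, fun j => ?_⟩
          · have := srIdeal_aeval_zero K Δ (fun v => e (X (some v)) ^ 2)
              (fun S hS => prod_zero_of_face hΔ.2 _ H' hH' (fun v hv => by
                rw [heX _ (by simpa using hv), sq, zero_mul]) S hS) (hmem i j hj)
            rw [map_mul, aeval_X] at this
            rcases mul_eq_zero.mp this with h0 | h0
            · rw [h0, zero_mul]
            · rw [eq_zero_of_pow_eq_zero h0, mul_zero]
          · rw [heX none (by simp), zero_mul]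
        · have hx : ∀ j : Fin n, (j : ℕ) < t → e (X (some j)) = 0 := by
            intro j hj
            apply heX
            intro hjH
            have := hH hjH
            simp [hF₀mem] at this
            omega
          refine ⟨fun i j hj => ?_, fun j => ?_⟩
          · rw [hx j (by omega), mul_zero]
          · rw [hx _ (by simp), mul_zero]
      have := hT0 hm
      rw [RingHom.mem_ker, map_pow] at this
      exact eq_zero_of_pow_eq_zero this
  refine ⟨main, ?_⟩
  apply Nat.sInf_le
  refine ⟨Fin.cons (M.det - X none ^ t) (fun i : Fin h =>
    if hi : (i : ℕ) < t then toR' K (sqSub K (q i)) + X none * X (some ⟨i, by omega⟩)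
    else toR' K (sqSub K (q i))), ?_⟩
  rw [main, Ideal.radical_idem, Fin.range_cons, hT]
  congr 3
  ext f
  constructor
  · rintro ⟨i, rfl⟩
    by_cases hi : (i : ℕ) < t
    · left
      refine ⟨⟨i, hi⟩, ?_⟩
      simp only [hi, dif_pos]
      rfl
    · right
      refine ⟨⟨i, by omega⟩, ?_⟩
      simp only [hi, dif_neg, not_false_iff]
  · rintro (⟨i, rfl⟩ | ⟨i, rfl⟩)
    · refine ⟨Fin.castLE hht i, ?_⟩
      have : ((Fin.castLE hht i : Fin h) : ℕ) < t := i.2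
      simp only [this, dif_pos]
      rfl
    · refine ⟨i.1, ?_⟩
      have : ¬ ((i.1 : Fin h) : ℕ) < t := not_lt.mpr i.2
      simp only [this, dif_neg, not_false_iff]

end Stmt8
end

section
/- Let K be algebraically closed of characteristic 0, Δ a simplicial complex on X = {x_1,...,x_n} with F ⊆ G faces of Δ, where G = {x_{s+1},...,x_n} is a facet and F = {x_{t+1},...,x_n}, 1 ≤ s ≤ t < n. Suppose q_1,...,q_h generate I_Δ up to radical with q_i = Σ_{j=1}^s a_{ij}x_j and a_{ij}x_j ∈ I_Δ for all i,j, and suppose h + 1 ≤ t. Let φ be the substitution x_k ↦ x_k^2, set q̄_i = φ(q_i) and ā_{ij} = φ(a_{ij})x_j (with ā_{ij} = 0 for j > s), let Ā' = (ā_{ij})_{i,j=1,...,h}, let ω_1,...,ω_h be the h-th roots of unity in K, and let A_{22} be the h×h matrix with entries ā_{ij} + δ_{ij}x_0(x_0 − ω_j x_{h+1}). Then, in R' = K[X ∪ {x_0}], I_{Δ'} = √( det A_{22} − x_0^{2h}, q̄_1 + x_0(x_0 − ω_1 x_{h+1})x_1, ..., q̄_h + x_0(x_0 − ω_h x_{h+1})x_h,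 x_0x_{h+2}, ..., x_0x_t ), where Δ' = Δ ∪ co_{x_0}F. In particular ara I_{Δ'} ≤ t. -/
open MvPolynomial

section Stmt9

variable {n : ℕ} (K : Type*) [Field K]

section Helpers

theorem aux_prime {V : Type*} {K : Type*} [Field K] (s : Set V) :
    (Ideal.span ((fun v : V => (X v : MvPolynomial V K)) '' s)).IsPrime := by
  classical
  let φ : MvPolynomial V K →ₐ[K] MvPolynomial V K := aeval fun v => if v ∈ s then 0 else X v
  set I := Ideal.span ((fun v : V => (X v : MvPolynomial V K)) '' s) with hI
  have hX : ∀ v ∈ s, (X v : MvPolynomial V K) ∈ I := fun v hv => Ideal.subset_span ⟨v, hv, rfl⟩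
  have h1 : (Ideal.Quotient.mkₐ K I).comp φ = Ideal.Quotient.mkₐ K I := by
    ext v
    by_cases hv : v ∈ s
    · simp [φ, hv, (Ideal.Quotient.eq_zero_iff_mem.mpr (hX v hv))]
    · simp [φ, hv]
  have h2 : I = RingHom.ker φ := by
    apply le_antisymm
    · rw [hI, Ideal.span_le]
      rintro _ ⟨v, hv, rfl⟩
      simp [φ, hv, RingHom.mem_ker]
    · intro f hf
      rw [RingHom.mem_ker] at hf
      have := congrArg (fun g => g f) h1
      simp only [AlgHom.comp_apply, hf, map_zero] at this
      exact Ideal.Quotient.eq_zero_iff_mem.mp this.symm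
  rw [h2]
  exact RingHom.ker_isPrime φ

theorem aux_X_mem {V : Type*} {K : Type*} [Field K] (s : Set V) (v : V) :
    (X v : MvPolynomial V K) ∈ Ideal.span ((fun v : V => (X v : MvPolynomial V K)) '' s) ↔
      v ∈ s := by
  classical
  refine ⟨fun h => ?_, fun h => Ideal.subset_span ⟨v, h, rfl⟩⟩
  rw [mem_ideal_span_X_image] at h
  obtain ⟨i, hi, h2⟩ := h (Finsupp.single v 1) (by simp [MvPolynomial.mem_support_iff])
  rw [Finsupp.single_apply_ne_zero] at h2
  exact h2.1 ▸ hi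

theorem aux_zero {V : Type*} [DecidableEq V] [Fintype V] {K : Type*} [Field K] [DecidableEq K]
    (Δ : Set (Finset V)) (hΔ : ∀ F ∈ Δ, ∀ G ⊆ F, G ∈ Δ) :
    zeroLocus K (srIdeal K Δ) = {x : V → K | (Finset.univ.filter fun v => x v ≠ 0) ∈ Δ} := by
  ext x
  rw [srIdeal, zeroLocus_span]
  simp only [Set.mem_setOf_eq, Set.forall_mem_image, map_prod, aeval_X]
  constructor
  · intro h
    by_contra hc
    have := h hc
    rw [Finset.prod_eq_zero_iff] at this
    obtain ⟨v, hv, h0⟩ := this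
    simp at hv
    exact hv h0
  · intro h S hS
    by_contra hc
    apply hS
    refine hΔ _ h _ fun v hv => ?_
    rw [Finset.prod_eq_zero_iff] at hc
    push Not at hc
    simpa using hc v hv

theorem aux_vanish {V : Type*} [DecidableEq V] [Fintype V] {K : Type*} [Field K] [DecidableEq K]
    [IsAlgClosed K]
    (Δ : Set (Finset V)) (hΔ : ∀ F ∈ Δ, ∀ G ⊆ F, G ∈ Δ) :
    srIdeal K Δ = vanishingIdeal K {x : V → K | (Finset.univ.filter fun v => x v ≠ 0) ∈ Δ} := by
  apply le_antisymm
  · rw [← aux_zero Δ hΔ]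
    exact le_vanishingIdeal_zeroLocus _
  · intro f hf
    have key : ∀ m ∈ f.support, m.support ∉ Δ := by
      intro m hm hmΔ
      have hp := aux_prime (K := K) {v : V | v ∉ m.support}
      have : f ∈ vanishingIdeal K (zeroLocus K (Ideal.span
          ((fun v : V => (X v : MvPolynomial V K)) '' {v : V | v ∉ m.support}))) := by
        refine vanishingIdeal_anti_mono ?_ hf
        intro x hx
        refine hΔ _ hmΔ _ fun v hv => ?_
        by_contra hc
        have := hx (X v) (Ideal.subset_span ⟨v, hc, rfl⟩)
        simp at this hv
        exact hv this
      rw [IsPrime.vanishingIdeal_zeroLocus, mem_ideal_span_X_image] at this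
      obtain ⟨i, hi, h2⟩ := this m hm
      simp at hi
      exact h2 hi
    rw [f.as_sum]
    refine Ideal.sum_mem _ fun m hm => ?_
    have h1 : (∏ v ∈ m.support, (X v : MvPolynomial V K)) ∈ srIdeal K Δ :=
      Ideal.subset_span ⟨m.support, key m hm, rfl⟩
    refine Ideal.mem_of_dvd _ ?_ h1
    rw [monomial_eq, Finsupp.prod]
    refine Dvd.dvd.mul_left ?_ _
    refine Finset.prod_dvd_prod_of_dvd _ _ fun v hv => dvd_pow_self _ ?_
    simpa using hv

theorem aux_height {n : ℕ} {K : Type*} [Field K] (k : ℕ) (hk : k ≤ n) :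
    (k : ℕ∞) ≤ (Ideal.span ((fun v : Fin n => (X v : MvPolynomial (Fin n) K)) ''
      {v : Fin n | (v : ℕ) < k})).height := by
  induction k with
  | zero => simp
  | succ k ih =>
    have p1 := aux_prime (K := K) {v : Fin n | (v : ℕ) < k}
    have p2 := aux_prime (K := K) {v : Fin n | (v : ℕ) < k + 1}
    refine le_trans ?_ (Ideal.height_add_one_le_of_lt_of_isPrime (I := Ideal.span
      ((fun v : Fin n => (X v : MvPolynomial (Fin n) K)) '' {v : Fin n | (v : ℕ) < k})) ?_)
    · push_cast
      gcongr
      exact ih (by omega)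
    · refine lt_of_le_of_ne (Ideal.span_mono (Set.image_mono fun v hv => ?_)) fun he => ?_
      · simp at hv ⊢; omega
      · have : (X ⟨k, hk⟩ : MvPolynomial (Fin n) K) ∈ Ideal.span
          ((fun v : Fin n => (X v : MvPolynomial (Fin n) K)) '' {v : Fin n | (v : ℕ) < k}) := by
          rw [he, aux_X_mem]; simp
        rw [aux_X_mem] at this
        simp at this

theorem aux_krull {n : ℕ} {K : Type*} [Field K] (Δ : Set (Finset (Fin n)))
    (hΔ : IsSimplicialComplex Δ) (s : ℕ) (hsn : s ≤ n)
    (hG : IsFacet Δ (Finset.univ.filter fun i : Fin n => s ≤ (i : ℕ)))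
    {h : ℕ} (q : Fin h → MvPolynomial (Fin n) K)
    (hrad : (Ideal.span (Set.range q)).radical = srIdeal K Δ) : s ≤ h := by
  classical
  set P := Ideal.span ((fun v : Fin n => (X v : MvPolynomial (Fin n) K)) ''
      {v : Fin n | (v : ℕ) < s}) with hP
  have pP : P.IsPrime := aux_prime _
  have hle : srIdeal K Δ ≤ P := by
    rw [srIdeal, Ideal.span_le]
    rintro _ ⟨S, hS, rfl⟩
    have : ∃ v ∈ S, (v : ℕ) < s := by
      by_contra hc
      push Not at hc
      exact hS (hΔ.2 _ hG.1 _ fun v hv => by simpa using hc v hv)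
    obtain ⟨v, hv, hvs⟩ := this
    exact Ideal.mem_of_dvd _ (Finset.dvd_prod_of_mem _ hv) ((aux_X_mem _ _).2 hvs)
  have hmin : P ∈ (Ideal.span (Set.range q)).minimalPrimes := by
    refine ⟨⟨pP, Ideal.le_radical.trans (hrad.le.trans hle)⟩, ?_⟩
    rintro Q ⟨pQ, hQ⟩ hQP
    have hQ2 : srIdeal K Δ ≤ Q := hrad ▸ pQ.radical_le_iff.2 hQ
    rw [hP, Ideal.span_le]
    rintro _ ⟨v, hv, rfl⟩
    have hv' : (v : ℕ) < s := hv
    have hn : insert v (Finset.univ.filter fun i : Fin n => s ≤ (i : ℕ)) ∉ Δ := by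
      intro hc
      have := hG.2 _ hc (Finset.subset_insert _ _)
      have h2 : v ∈ (Finset.univ.filter fun i : Fin n => s ≤ (i : ℕ)) := by
        rw [this]; exact Finset.mem_insert_self _ _
      simp at h2
      omega
    have := hQ2 (Ideal.subset_span ⟨_, hn, rfl⟩)
    obtain ⟨w, hw, hwQ⟩ := (pQ.prod_mem_iff).1 this
    have h3 := (aux_X_mem _ _).1 (hQP hwQ)
    have h4 : (w : ℕ) < s := h3
    rw [Finset.mem_insert] at hw
    rcases hw with rfl | hw
    · exact hwQ
    · simp at hw; omega
  have h5 : P.height ≤ ((Set.range q).ncard : ℕ∞) := by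
    exact Ideal.height_le_card_of_mem_minimalPrimes_span (Set.finite_range q) hmin
  have h6 : (Set.range q).ncard ≤ h := by
    rw [← Set.image_univ]
    refine (Set.ncard_image_le).trans ?_
    simp
  have := (aux_height (K := K) s hsn).trans h5
  have := Nat.cast_le.1 this
  omega

theorem aux_prod {K : Type*} [Field K] [IsAlgClosed K] [CharZero K] {h : ℕ} (hh : 0 < h)
    (ω : Fin h → K) (hωinj : Function.Injective ω)
    (hω : Set.range ω = {z : K | z ^ h = 1}) (x y : K) :
    ∏ i, (x - ω i * y) = x ^ h - y ^ h := by
  classical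
  have : NeZero (h : K) := ⟨by exact_mod_cast hh.ne'⟩
  have : NeZero h := ⟨hh.ne'⟩
  obtain ⟨ζ, hζ⟩ := HasEnoughRootsOfUnity.exists_primitiveRoot K h
  rw [hζ.pow_sub_pow_eq_prod_sub_mul _ _ hh]
  have : Polynomial.nthRootsFinset h (1 : K) = Finset.univ.image ω := by
    ext z
    rw [Polynomial.mem_nthRootsFinset hh]
    have := Set.ext_iff.1 hω z
    simp at this ⊢
    exact this.symm
  rw [this, Finset.prod_image (fun _ _ _ _ h => hωinj h)]

theorem aux_ara {R : Type*} [CommRing R] (I : Ideal R) (T : Set R) (hT : T.Finite) (t : ℕ)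
    (hc : T.ncard ≤ t) (hI : I = (Ideal.span T).radical) : ara I ≤ t := by
  classical
  refine le_trans (Nat.sInf_le (m := T.ncard) ?_) hc
  have := hT.to_subtype
  have e : Fin T.ncard ≃ T := (Finite.equivFin T).symm
  refine ⟨fun i => e i, ?_⟩
  have : Set.range (fun i => (e i : R)) = T := by
    rw [Set.range_comp' Subtype.val e, e.surjective.range_eq]; simp
  rw [this, hI, Ideal.radical_idem]



theorem aux_cone_down {V : Type*} [DecidableEq V] (Δ : Set (Finset V))
    (hΔ : ∀ F ∈ Δ, ∀ G ⊆ F, G ∈ Δ) (F : Finset V) :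
    ∀ S ∈ coneUnion Δ F, ∀ G ⊆ S, G ∈ coneUnion Δ F := by
  rintro S (⟨S, hS, rfl⟩ | hS) G hGS
  · left
    obtain ⟨u, hu, rfl⟩ := Finset.subset_map_iff.1 hGS
    exact ⟨u, hΔ _ hS _ hu, rfl⟩
  · right
    exact hGS.trans hS

theorem aux_cone_mem {n : ℕ} {K : Type*} [Field K] [DecidableEq K] (Δ : Set (Finset (Fin n)))
    (hΔ : ∀ F ∈ Δ, ∀ G ⊆ F, G ∈ Δ) (t : ℕ) (x : Option (Fin n) → K) :
    (Finset.univ.filter fun v => x v ≠ 0) ∈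
      coneUnion Δ (Finset.univ.filter fun i : Fin n => t ≤ (i : ℕ)) ↔
    (x none = 0 ∧ (Finset.univ.filter fun v => x (some v) ≠ 0) ∈ Δ) ∨
      ∀ v : Fin n, (v : ℕ) < t → x (some v) = 0 := by
  constructor
  · rintro (⟨S, hS, hSx⟩ | hS)
    · left
      have h1 := Finset.ext_iff.1 hSx
      refine ⟨by simpa using h1 none, ?_⟩
      convert hS
      ext v
      have := h1 (some v)
      simp at this ⊢
      exact this.symm
    · right
      intro v hv
      by_contra hc
      have := hS (show some v ∈ _ by simpa using hc)
      simp at this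
      omega
  · rintro (⟨h0, hS⟩ | hS)
    · left
      refine ⟨_, hS, ?_⟩
      ext v
      cases v <;> simp [h0]
    · right
      intro v hv
      cases v with
      | none => simp
      | some v =>
        simp at hv ⊢
        by_contra hc
        exact hv (hS v (by omega))

theorem aux_eval {n : ℕ} {K : Type*} [Field K] (x : Option (Fin n) → K)
    (p : MvPolynomial (Fin n) K) :
    aeval x (toR' K p) = aeval (fun v => x (some v)) p := by
  rw [toR', aeval_rename]; rfl

theorem aux_eval_sq {n : ℕ} {K : Type*} [Field K] (y : Fin n → K)
    (p : MvPolynomial (Fin n) K) :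
    aeval y (sqSub K p) = aeval (fun v => y v ^ 2) p := by
  have : (aeval y).comp (sqSub K) = aeval (fun v => y v ^ 2) := by
    ext v; simp [sqSub]
  exact congrArg (fun g => g p) this

/-- The pointwise (linear algebra) core of the argument. -/
theorem aux_core {n : ℕ} {K : Type*} [Field K] [IsAlgClosed K] [CharZero K]
    (s t : ℕ) (hst : s ≤ t) {h : ℕ} (hh : 0 < h) (hsh : s ≤ h)
    (hht : h + 1 ≤ t) (hn : h < n)
    (b : Fin h → Fin n → K) (y : Fin n → K) (x0 : K) (hx0 : x0 ≠ 0)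
    (ω : Fin h → K) (hωinj : Function.Injective ω)
    (hω : Set.range ω = {z : K | z ^ h = 1})
    (hdet : (Matrix.of fun i j : Fin h =>
      (if (j : ℕ) < s then b i (Fin.castLE hn.le j) * y (Fin.castLE hn.le j) else 0) +
        if i = j then x0 * (x0 - ω j * y ⟨h, hn⟩) else 0).det = x0 ^ (2 * h))
    (hq : ∀ i : Fin h, ∑ j ∈ Finset.univ.filter (fun j : Fin n => (j : ℕ) < s), b i j * y j ^ 2 +
      x0 * (x0 - ω i * y ⟨h, hn⟩) * y (Fin.castLE hn.le i) = 0)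
    (hx : ∀ j : Fin n, h + 1 ≤ (j : ℕ) → (j : ℕ) < t → x0 * y j = 0) :
    ∀ v : Fin n, (v : ℕ) < t → y v = 0 := by
  classical
  set A := (Matrix.of fun i j : Fin h =>
      (if (j : ℕ) < s then b i (Fin.castLE hn.le j) * y (Fin.castLE hn.le j) else 0) +
        if i = j then x0 * (x0 - ω j * y ⟨h, hn⟩) else 0) with hA
  have hAv : A.mulVec (fun j => y (Fin.castLE hn.le j)) = 0 := by
    ext i
    rw [Pi.zero_apply, ← hq i, Matrix.mulVec, dotProduct]
    simp only [hA, Matrix.of_apply, add_mul, Finset.sum_add_distrib, ite_mul, zero_mul,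
      Finset.sum_ite_eq, Finset.mem_univ, if_true]
    congr 1
    rw [← Finset.sum_filter]
    refine Finset.sum_bij (fun j _ => Fin.castLE hn.le j) ?_ ?_ ?_ ?_
    · intro j hj; simpa using hj
    · intro j _ k _ hjk; exact Fin.castLE_injective _ hjk
    · intro j hj
      simp at hj
      exact ⟨⟨j, by omega⟩, by simpa using hj, by ext; simp⟩
    · intro j _; ring
  have hv0 : (fun j : Fin h => y (Fin.castLE hn.le j)) = 0 :=
    Matrix.eq_zero_of_mulVec_eq_zero (by rw [hdet]; exact pow_ne_zero _ hx0) hAv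
  have hv : ∀ v : Fin n, (v : ℕ) < h → y v = 0 := fun v hvh => congrFun hv0 ⟨v, hvh⟩
  have hyh : y ⟨h, hn⟩ = 0 := by
    have hAd : A = Matrix.diagonal fun j => x0 * (x0 - ω j * y ⟨h, hn⟩) := by
      ext i j
      have : y (Fin.castLE hn.le j) = 0 := congrFun hv0 j
      by_cases hij : i = j
      · subst hij; simp [hA, this]
      · simp [hA, this, hij]
    rw [hAd, Matrix.det_diagonal, Finset.prod_mul_distrib, aux_prod hh ω hωinj hω] at hdet
    simp only [Finset.prod_const, Finset.card_univ, Fintype.card_fin] at hdet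
    have : x0 ^ h * y ⟨h, hn⟩ ^ h = 0 := by linear_combination -hdet
    rcases mul_eq_zero.1 this with h1 | h1
    · exact absurd h1 (pow_ne_zero _ hx0)
    · exact pow_eq_zero_iff hh.ne' |>.1 h1
  intro v hvt
  rcases lt_trichotomy (v : ℕ) h with h1 | h1 | h1
  · exact hv v h1
  · rw [← hyh]; congr 1; ext; exact h1
  · exact (mul_eq_zero.1 (hx v h1 hvt)).resolve_left hx0

end Helpers

/-- Case 2.2 of Theorem 1: here the variable `xⱼ` (for `1 ≤ j ≤ n`) is the
variable with index `j-1 : Fin n`, so `G = {x_{s+1},…,xₙ}` is the set of indices `≥ s`,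
`F = {x_{t+1},…,xₙ}` the set of indices `≥ t`, and `x_{h+1}` is the variable of index `h`.
`K` is algebraically closed of characteristic `0`; `q₁,…,q_h` generate `I_Δ` up to radical,
`qᵢ = ∑_{j=1}^s aᵢⱼxⱼ` with `aᵢⱼxⱼ ∈ I_Δ`, and `h + 1 ≤ t`.  With `q̄ᵢ = φ(qᵢ)`,
`āᵢⱼ = φ(aᵢⱼ)xⱼ` (zero for `j > s`), `ω₁,…,ω_h` the `h`-th roots of unity, and `A₂₂` the
`h×h` matrix with entries `āᵢⱼ + δᵢⱼ·x₀(x₀ − ωⱼx_{h+1})`, the ideal `I_{Δ'}` is the radical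
of the ideal generated by `det A₂₂ − x₀^{2h}`, `q̄ᵢ + x₀(x₀ − ωᵢx_{h+1})xᵢ` (`1 ≤ i ≤ h`)
and `x₀xⱼ` (`h+2 ≤ j ≤ t`); in particular `ara I_{Δ'} ≤ t`. -/
theorem srIdeal_coneUnion_eq_radical_case22 [IsAlgClosed K] [CharZero K]
    (Δ : Set (Finset (Fin n))) (hΔ : IsSimplicialComplex Δ)
    (s t : ℕ) (hs : 1 ≤ s) (hst : s ≤ t) (htn : t < n)
    (hG : IsFacet Δ (Finset.univ.filter fun i : Fin n => s ≤ (i : ℕ)))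
    (hF : (Finset.univ.filter fun i : Fin n => t ≤ (i : ℕ)) ∈ Δ)
    {h : ℕ} (hht : h + 1 ≤ t)
    (q : Fin h → MvPolynomial (Fin n) K) (a : Fin h → Fin n → MvPolynomial (Fin n) K)
    (hdecomp : ∀ i, q i =
      ∑ j ∈ Finset.univ.filter (fun j : Fin n => (j : ℕ) < s), a i j * X j)
    (hmem : ∀ (i : Fin h) (j : Fin n), (j : ℕ) < s → a i j * X j ∈ srIdeal K Δ)
    (hrad : (Ideal.span (Set.range q)).radical = srIdeal K Δ)
    (ω : Fin h → K) (hωinj : Function.Injective ω)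
    (hω : Set.range ω = {z : K | z ^ h = 1}) :
    srIdeal K (coneUnion Δ (Finset.univ.filter fun i : Fin n => t ≤ (i : ℕ))) =
      (Ideal.span
        (insert
          ((Matrix.of fun i j : Fin h =>
              toR' K (if ((j : ℕ) < s) then
                  sqSub K (a i (Fin.castLE (le_of_lt (lt_trans (Nat.lt_of_succ_le hht) htn)) j)) *
                    X (Fin.castLE (le_of_lt (lt_trans (Nat.lt_of_succ_le hht) htn)) j)
                else 0) +
              if i = j then
                X none * (X none -
                  C (ω j) * X (some (⟨h, lt_trans (Nat.lt_of_succ_le hht) htn⟩ : Fin n)))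
              else 0).det - X none ^ (2 * h))
          ((Set.range fun i : Fin h =>
              toR' K (sqSub K (q i)) +
                X none * (X none -
                    C (ω i) * X (some (⟨h, lt_trans (Nat.lt_of_succ_le hht) htn⟩ : Fin n))) *
                  X (some (Fin.castLE (le_of_lt (lt_trans (Nat.lt_of_succ_le hht) htn)) i))) ∪
           (Set.range fun j : {j : Fin n // h + 1 ≤ (j : ℕ) ∧ (j : ℕ) < t} =>
              (X none : MvPolynomial (Option (Fin n)) K) * X (some j.1))))).radical
    ∧ ara (srIdeal K (coneUnion Δ (Finset.univ.filter fun i : Fin n => t ≤ (i : ℕ)))) ≤ t := by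
  classical
  have hh : 0 < h := by
    rcases Nat.eq_zero_or_pos h with rfl | h0
    · have : (1 : K) ∈ Set.range ω := by rw [hω]; simp
      obtain ⟨i, _⟩ := this
      exact i.elim0
    · exact h0
  have hsh : s ≤ h := aux_krull Δ hΔ s (by omega) hG q hrad
  have hn : h < n := by omega
  -- points at which all `q i` vanish
  have hpt : ∀ y : Fin n → K, (∀ i, aeval (fun v => y v ^ 2) (q i) = 0) ↔
      (Finset.univ.filter fun v => y v ≠ 0) ∈ Δ := by
    intro y
    have h1 := Set.ext_iff.1 (aux_zero (K := K) Δ hΔ.2) (fun v => y v ^ 2)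
    have h2 : zeroLocus K (srIdeal K Δ) = zeroLocus K (Ideal.span (Set.range q)) := by
      rw [← hrad]
      apply le_antisymm
      · exact zeroLocus_anti_mono Ideal.le_radical
      · exact le_zeroLocus_iff_le_vanishingIdeal.2 (radical_le_vanishingIdeal_zeroLocus _)
    rw [h2, zeroLocus_span] at h1
    simpa using h1
  have hpt2 : ∀ y : Fin n → K, (Finset.univ.filter fun v => y v ≠ 0) ∈ Δ →
      ∀ p ∈ srIdeal K Δ, aeval (fun v => y v ^ 2) p = 0 := by
    intro y hy
    have h1 := Set.ext_iff.1 (aux_zero (K := K) Δ hΔ.2) (fun v => y v ^ 2)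
    exact h1.2 (by simpa using hy)
  have hmain : ∀ T : Set (MvPolynomial (Option (Fin n)) K),
      (∀ x : Option (Fin n) → K, (∀ p ∈ T, aeval x p = 0) ↔
        ((x none = 0 ∧ (Finset.univ.filter fun v => x (some v) ≠ 0) ∈ Δ) ∨
          ∀ v : Fin n, (v : ℕ) < t → x (some v) = 0)) →
      T.Finite → T.ncard ≤ t →
      srIdeal K (coneUnion Δ (Finset.univ.filter fun i : Fin n => t ≤ (i : ℕ))) =
        (Ideal.span T).radical ∧
      ara (srIdeal K (coneUnion Δ (Finset.univ.filter fun i : Fin n => t ≤ (i : ℕ)))) ≤ t := by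
    intro T hT hfin hcard
    have heq : srIdeal K (coneUnion Δ (Finset.univ.filter fun i : Fin n => t ≤ (i : ℕ))) =
        (Ideal.span T).radical := by
      rw [← vanishingIdeal_zeroLocus_eq_radical (K := K), zeroLocus_span,
        aux_vanish _ (aux_cone_down Δ hΔ.2 _)]
      congr 1
      ext x
      exact (aux_cone_mem Δ hΔ.2 t x).trans (hT x).symm
    exact ⟨heq, aux_ara _ T hfin t hcard heq⟩
  apply hmain
  · intro x
    rw [Set.forall_mem_insert]
    simp only [Set.mem_union, or_imp, forall_and, Set.forall_mem_range]
    set y : Fin n → K := fun v => x (some v) with hy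
    set b : Fin h → Fin n → K := fun i j => aeval (fun v => y v ^ 2) (a i j) with hb
    have hqe : ∀ i, aeval (fun v => y v ^ 2) (q i) =
        ∑ j ∈ Finset.univ.filter (fun j : Fin n => (j : ℕ) < s), b i j * y j ^ 2 := by
      intro i
      rw [hdecomp i]
      simp [hb]
    rw [map_sub, AlgHom.map_det]
    have hAe : (aeval x).mapMatrix (Matrix.of fun i j : Fin h =>
              toR' K (if ((j : ℕ) < s) then
                  sqSub K (a i (Fin.castLE (le_of_lt (lt_trans (Nat.lt_of_succ_le hht) htn)) j)) *
                    X (Fin.castLE (le_of_lt (lt_trans (Nat.lt_of_succ_le hht) htn)) j)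
                else 0) +
              if i = j then
                X none * (X none -
                  C (ω j) * X (some (⟨h, lt_trans (Nat.lt_of_succ_le hht) htn⟩ : Fin n)))
              else 0) = (Matrix.of fun i j : Fin h =>
      (if (j : ℕ) < s then b i (Fin.castLE hn.le j) * y (Fin.castLE hn.le j) else 0) +
        if i = j then x none * (x none - ω j * y ⟨h, hn⟩) else 0) := by
      ext i j
      simp only [AlgHom.mapMatrix_apply, Matrix.map_apply, Matrix.of_apply, map_add, aux_eval]
      congr 1
      · split_ifs
        · simp only [map_mul, aux_eval_sq, aeval_X, hb]
          rfl
        · simp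
      · split_ifs
        · simp [hy]
        · simp
    rw [hAe]
    simp only [map_add, map_mul, map_sub, map_pow, aux_eval, aux_eval_sq, aeval_X, aeval_C,
      Algebra.algebraMap_self, RingHom.id_apply]
    constructor
    · rintro ⟨h1, h2, h3⟩
      by_cases hx0 : x none = 0
      · left
        refine ⟨hx0, (hpt y).1 fun i => ?_⟩
        simpa [hx0] using h2 i
      · right
        refine aux_core s t hst hh hsh hht hn b y (x none) hx0 ω hωinj hω (sub_eq_zero.1 h1) ?_ ?_
        · intro i
          rw [← hqe i]
          exact h2 i
        · intro j hj1 hj2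
          exact h3 ⟨j, hj1, hj2⟩
    · rintro (⟨hx0, hS⟩ | hS)
      · refine ⟨?_, fun i => ?_, fun j => by simp [hx0]⟩
        · have hM : (Matrix.of fun i j : Fin h =>
              (if (j : ℕ) < s then b i (Fin.castLE hn.le j) * y (Fin.castLE hn.le j) else 0) +
              if i = j then x none * (x none - ω j * y ⟨h, hn⟩) else 0) = 0 := by
            ext i j
            simp only [Matrix.of_apply, hx0, zero_mul, ite_self, add_zero, Matrix.zero_apply]
            split_ifs with hj
            · have := hpt2 y hS _ (hmem i (Fin.castLE hn.le j) (by simpa using hj))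
              simp only [map_mul, aeval_X] at this
              rcases mul_eq_zero.1 this with h1 | h1
              · simp only [hb]
                rw [h1, zero_mul]
              · rw [pow_eq_zero_iff two_ne_zero] at h1
                simp [h1]
            · rfl
          have : Nonempty (Fin h) := ⟨⟨0, hh⟩⟩
          rw [hM, Matrix.det_zero, hx0, zero_pow (by omega), sub_zero]
        · simp only [hx0, zero_mul, add_zero]
          exact (hpt y).2 hS i
      · have hSy : (Finset.univ.filter fun v => y v ≠ 0) ∈ Δ := by
          refine hΔ.2 _ hF _ fun v hv => ?_
          simp at hv ⊢
          by_contra hc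
          exact hv (hS v (by omega))
        refine ⟨?_, fun i => ?_, fun j => ?_⟩
        · have hM : (Matrix.of fun i j : Fin h =>
              (if (j : ℕ) < s then b i (Fin.castLE hn.le j) * y (Fin.castLE hn.le j) else 0) +
              if i = j then x none * (x none - ω j * y ⟨h, hn⟩) else 0) =
              Matrix.diagonal fun _ => x none ^ 2 := by
            ext i j
            have e1 : y ⟨h, hn⟩ = 0 := hS _ hht
            have e2 : y (Fin.castLE hn.le j) = 0 := hS _ (by simp; omega)
            by_cases hij : i = j
            · subst hij; simp [e1, e2, pow_two]
            · simp [e1, e2, hij]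
          rw [hM, Matrix.det_diagonal]
          simp [pow_mul]
        · have e2 : x (some (Fin.castLE hn.le i)) = 0 := hS _ (by simp; omega)
          rw [e2, mul_zero, add_zero]
          exact (hpt y).2 hSy i
        · have := hS j.1 j.2.2
          rw [this, mul_zero]
  · exact ((Set.finite_range _).union (Set.finite_range _)).insert _
  · refine (Set.ncard_insert_le _ _).trans ?_
    have h1 : ∀ {ι : Type} [Finite ι] (f : ι → MvPolynomial (Option (Fin n)) K),
        (Set.range f).ncard ≤ Nat.card ι := by
      intro ι _ f
      rw [← Set.image_univ, ← Set.ncard_univ]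
      exact Set.ncard_image_le
    have h2 : Nat.card {j : Fin n // h + 1 ≤ (j : ℕ) ∧ (j : ℕ) < t} ≤ t - (h + 1) := by
      have := Nat.card_le_card_of_injective
        (fun j : {j : Fin n // h + 1 ≤ (j : ℕ) ∧ (j : ℕ) < t} =>
          (⟨(j.1 : ℕ) - (h + 1), by have := j.2; omega⟩ : Fin (t - (h + 1)))) (by
            intro j k hjk
            have h3 := j.2
            have h4 := k.2
            simp at hjk
            ext
            omega)
      simpa using this
    have h3 := Set.ncard_union_le (Set.range fun i : Fin h =>
              toR' K (sqSub K (q i)) +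
                X none * (X none -
                    C (ω i) * X (some (⟨h, lt_trans (Nat.lt_of_succ_le hht) htn⟩ : Fin n))) *
                  X (some (Fin.castLE (le_of_lt (lt_trans (Nat.lt_of_succ_le hht) htn)) i)))
           (Set.range fun j : {j : Fin n // h + 1 ≤ (j : ℕ) ∧ (j : ℕ) < t} =>
              (X none : MvPolynomial (Option (Fin n)) K) * X (some j.1))
    have h4 := h1 (fun i : Fin h =>
              toR' K (sqSub K (q i)) +
                X none * (X none -
                    C (ω i) * X (some (⟨h, lt_trans (Nat.lt_of_succ_le hht) htn⟩ : Fin n))) *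
                  X (some (Fin.castLE (le_of_lt (lt_trans (Nat.lt_of_succ_le hht) htn)) i)))
    have h5 := h1 (fun j : {j : Fin n // h + 1 ≤ (j : ℕ) ∧ (j : ℕ) < t} =>
              (X none : MvPolynomial (Option (Fin n)) K) * X (some j.1))
    rw [Nat.card_eq_fintype_card, Fintype.card_fin] at h4
    omega

end Stmt9
end
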